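/- arXiv:1903.07514 — 5 statements merged into one kernel-verified Lean document; each statement's English description precedes it below -/
import Mathlib

section
/- Let A be a commutative Noetherian local ring and M a nonzero finitely generated A-module of finite injective dimension. Then injdim M = depth A (Bass formula combined with the fact that injective dimension of a finitely generated module of finite injective dimension equals the depth of the ring). -/
open CategoryTheory

/-- The `n`-th Ext group of `M` and `N` over `R`. -/
noncomputable def extModule (R : Type) [CommRing R] (M N : ModuleCat R) (n : ℕ) :
    ModuleCat R :=
  ((Ext R (ModuleCat R) n).obj (Opposite.op M)).obj N

/-- Injective dimension: the least `n` such that `Ext^i(-, M)` vanishes for all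
`i > n`. -/
noncomputable def injDim (R : Type) [CommRing R] (M : ModuleCat R) : ℕ∞ :=
  sInf {n : ℕ∞ | ∀ (N : ModuleCat R) (i : ℕ), n < (i : ℕ∞) →
    Subsingleton (extModule R N M i)}

/-- The depth of a module over a local ring. -/
noncomputable def depth (R : Type) [CommRing R] [IsLocalRing R]
    (M : Type) [AddCommGroup M] [Module R M] : ℕ∞ :=
  sSup {n : ℕ∞ | ∃ rs : List R, (rs.length : ℕ∞) = n ∧
    (∀ x ∈ rs, x ∈ IsLocalRing.maximalIdeal R) ∧ RingTheory.Sequence.IsRegular M rs}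

namespace BassAux

open CategoryTheory Limits IsLocalRing RingTheory.Sequence Pointwise

/-- The derived functor Ext and the derived category Ext vanish simultaneously (positive degree). -/
lemma subsingleton_extModule_iff (R : Type) [CommRing R] (N M : ModuleCat R) (n : ℕ) :
    Subsingleton (extModule R N M (n + 1)) ↔ Subsingleton (Abelian.Ext N M (n + 1)) := by
  let P : ProjectiveResolution N := ProjectiveResolution.of N
  have h1 : Subsingleton (extModule R N M (n + 1)) ↔
      ((P.complex.linearYonedaObj R M).ExactAt (n + 1)) := by
    rw [← ModuleCat.isZero_iff_subsingleton, HomologicalComplex.exactAt_iff_isZero_homology]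
    exact (P.isoExt (R := R) (n + 1) M).isZero_iff
  rw [h1, HomologicalComplex.exactAt_iff' _ n (n + 1) (n + 2) (by simp) (by simp),
    ShortComplex.moduleCat_exact_iff]
  constructor
  · intro h
    refine subsingleton_of_forall_eq 0 fun α => ?_
    obtain ⟨f, hf, rfl⟩ := P.extMk_surjective α (n + 2) rfl
    rw [P.extMk_eq_zero_iff f (n + 2) rfl hf n rfl]
    obtain ⟨g, hg⟩ := h f hf
    exact ⟨g, hg⟩
  · intro h f hf
    have := (P.extMk_eq_zero_iff f (n + 2) rfl hf n rfl).1 (Subsingleton.elim _ _)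
    obtain ⟨g, hg⟩ := this
    exact ⟨g, hg⟩

lemma mem_iff (R : Type) [CommRing R] (M : ModuleCat R) (n : ℕ) :
    (∀ (N : ModuleCat R) (i : ℕ), (n : ℕ∞) < (i : ℕ∞) → Subsingleton (extModule R N M i)) ↔
      HasInjectiveDimensionLT M (n + 1) := by
  rw [hasInjectiveDimensionLT_iff.{0}]
  constructor
  · intro h i hi N e
    obtain ⟨j, rfl⟩ : ∃ j, i = j + 1 := ⟨i - 1, by omega⟩
    have := (subsingleton_extModule_iff R N M j).1 (h N (j + 1) (by exact_mod_cast hi))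
    exact Subsingleton.elim _ _
  · intro h N i hi
    have hi' : n < i := by exact_mod_cast hi
    obtain ⟨j, rfl⟩ : ∃ j, i = j + 1 := ⟨i - 1, by omega⟩
    rw [subsingleton_extModule_iff]
    exact subsingleton_of_forall_eq 0 fun e => h _ hi' e

variable {A : Type} [CommRing A]

lemma injective_of_ext_quotient (M : ModuleCat.{0} A)
    (h : ∀ I : Ideal A, Subsingleton (Abelian.Ext (ModuleCat.of A (A ⧸ I)) M 1)) :
    Injective M := by
  rw [← Module.injective_iff_injective_object, ← Module.Baer.iff_injective]
  intro I g
  have hS := LinearMap.shortExact_shortComplexKer (R := A) (f := I.mkQ) I.mkQ_surjective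
  let S := (I.mkQ).shortComplexKer
  have : Subsingleton (Abelian.Ext S.X₃ M 1) := h I
  let g' : S.X₁ ⟶ M := ModuleCat.ofHom (g ∘ₗ
    (LinearEquiv.ofEq (LinearMap.ker I.mkQ) I (by simp)).toLinearMap)
  obtain ⟨φ, hφ⟩ := Abelian.Ext.contravariant_sequence_exact₁ hS _
    (Abelian.Ext.mk₀ g') (zero_add 1) (Subsingleton.elim _ _)
  obtain ⟨φ, rfl⟩ := Abelian.Ext.homEquiv₀.symm.surjective φ
  have h2 : S.f ≫ φ = g' := Abelian.Ext.homEquiv₀.symm.injective (by simpa using hφ)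
  refine ⟨φ.hom, fun x hx => ?_⟩
  have h3 := congrArg (fun k => k.hom ⟨x, by simpa using hx⟩) h2
  exact h3

lemma hasInjectiveDimensionLT_of_ext_quotient (n : ℕ) (M : ModuleCat.{0} A)
    (h : ∀ I : Ideal A, Subsingleton (Abelian.Ext (ModuleCat.of A (A ⧸ I)) M (n + 1))) :
    HasInjectiveDimensionLT M (n + 1) := by
  induction n generalizing M with
  | zero =>
    rw [zero_add, ← injective_iff_hasInjectiveDimensionLT_one]
    exact injective_of_ext_quotient M h
  | succ n ih =>
    obtain ⟨I, _, f, _⟩ := EnoughInjectives.presentation M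
    let S := ShortComplex.mk f (cokernel.π f) (cokernel.condition f)
    have hS : S.ShortExact := { exact := ShortComplex.exact_cokernel f }
    rw [← hS.hasInjectiveDimensionLT_X₃_iff n ‹_›]
    apply ih
    intro J
    refine subsingleton_of_forall_eq 0 fun e => ?_
    have := h J
    obtain ⟨x, hx⟩ := Abelian.Ext.covariant_sequence_exact₃ _ hS e rfl
      (by exact Subsingleton.elim (α := Abelian.Ext (ModuleCat.of A (A ⧸ J)) M (n + 1 + 1)) _ _)
    have : Injective S.X₂ := ‹_›
    rw [← hx, Abelian.Ext.eq_zero_of_injective x, Abelian.Ext.zero_comp]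

variable [IsNoetherianRing A] [IsLocalRing A]

/-- Nakayama step. -/
lemma subsingleton_ext_of_smul {N M : ModuleCat.{0} A} [Module.Finite A N] [Module.Finite A M]
    {x : A} (hx : x ∈ maximalIdeal A) (reg : IsSMulRegular N x) (n : ℕ)
    (h : Subsingleton (Abelian.Ext (ModuleCat.of A (QuotSMulTop x N)) M (n + 1))) :
    Subsingleton (Abelian.Ext N M n) := by
  by_contra ntr
  rw [not_subsingleton_iff_nontrivial] at ntr
  have hj : x ∈ (Module.annihilator A (Abelian.Ext N M n)).jacobson :=
    (IsLocalRing.maximalIdeal_le_jacobson _) hx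
  absurd Submodule.top_ne_pointwise_smul_of_mem_jacobson_annihilator hj
  rw [eq_comm, eq_top_iff]
  intro y _
  obtain ⟨z, hz⟩ := Abelian.Ext.contravariant_sequence_exact₁ reg.smulShortComplex_shortExact M y
    (add_comm 1 n)
    (by exact Subsingleton.elim
          (α := Abelian.Ext (ModuleCat.of A (QuotSMulTop x N)) M (n + 1)) _ _)
  have hz' : x • z = y := by
    have h1 : (Abelian.Ext.mk₀ (x • 𝟙 N)).comp (show Abelian.Ext N M n from z) (zero_add n)
        = x • (show Abelian.Ext N M n from z) := by
      rw [Abelian.Ext.mk₀_smul, Abelian.Ext.smul_comp, Abelian.Ext.mk₀_id_comp]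
    exact h1.symm.trans hz
  rw [← hz']
  exact Submodule.smul_mem_pointwise_smul _ _ ⊤ trivial

lemma subsingleton_ext_of_iso {N N' : ModuleCat.{0} A} (e : N ≅ N') (M : ModuleCat.{0} A) (n : ℕ)
    (h : Subsingleton (Abelian.Ext N M n)) : Subsingleton (Abelian.Ext N' M n) := by
  refine subsingleton_of_forall_eq 0 fun y => ?_
  have : (Abelian.Ext.mk₀ e.inv).comp ((Abelian.Ext.mk₀ e.hom).comp y (zero_add n)) (zero_add n)
      = y := by
    simp
  rw [← this, Subsingleton.elim ((Abelian.Ext.mk₀ e.hom).comp y (zero_add n)) 0,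
    Abelian.Ext.comp_zero]

lemma subsingleton_ext_of_isWeaklyRegular (M : ModuleCat.{0} A) [Module.Finite A M] (rs : List A)
    (mem : ∀ r ∈ rs, r ∈ maximalIdeal A) (N : ModuleCat.{0} A) [Module.Finite A N]
    (reg : IsWeaklyRegular N rs) (n : ℕ)
    (h : Subsingleton (Abelian.Ext
      (ModuleCat.of A (N ⧸ Ideal.ofList rs • (⊤ : Submodule A N))) M (n + rs.length))) :
    Subsingleton (Abelian.Ext N M n) := by
  induction rs generalizing N n with
  | nil =>
    refine subsingleton_ext_of_iso (LinearEquiv.toModuleIso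
      (Submodule.quotEquivOfEqBot _ (by simp))) M n h
  | cons x rs ih =>
    simp only [List.mem_cons, forall_eq_or_imp] at mem
    rw [isWeaklyRegular_cons_iff] at reg
    apply subsingleton_ext_of_smul mem.1 reg.1
    apply ih mem.2 (ModuleCat.of A (QuotSMulTop x N)) reg.2
    have e : n + 1 + rs.length = n + (x :: rs).length := by simp; omega
    rw [e]
    exact subsingleton_ext_of_iso
      (Submodule.quotOfListConsSMulTopEquivQuotSMulTopInner N x rs).toModuleIso M _ h

lemma length_le (M : ModuleCat.{0} A) [Module.Finite A M] [Nontrivial M] (r : ℕ)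
    (hr : HasInjectiveDimensionLT M (r + 1)) (rs : List A)
    (mem : ∀ x ∈ rs, x ∈ maximalIdeal A) (reg : IsRegular A rs) : rs.length ≤ r := by
  by_contra! hlt
  have h0 := subsingleton_ext_of_isWeaklyRegular M rs mem (ModuleCat.of A A) reg.1 0
    (HasInjectiveDimensionLT.subsingleton M (r + 1) _ (by omega) _)
  have h1 : Subsingleton (ModuleCat.of A A ⟶ M) :=
    Abelian.Ext.addEquiv₀.subsingleton_congr.mp h0
  have h2 : Subsingleton (A →ₗ[A] M) := (ModuleCat.homAddEquiv (M := ModuleCat.of A A)).symm.subsingleton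
  have h3 : Subsingleton M := (LinearMap.ringLmapEquivSelf A A M).symm.subsingleton
  exact not_subsingleton M h3

lemma subsingleton_ext_finite (M : ModuleCat.{0} A) [Module.Finite A M] (r : ℕ)
    (hr : HasInjectiveDimensionLT M (r + 1))
    (hk : Subsingleton (Abelian.Ext (ModuleCat.of A (A ⧸ maximalIdeal A)) M r))
    (N : Type) [AddCommGroup N] [Module A N] (hN : Module.Finite A N) :
    Subsingleton (Abelian.Ext (ModuleCat.of A N) M r) := by
  induction hN using IsNoetherianRing.induction_on_isQuotientEquivQuotientPrime A with
  | subsingleton N =>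
    refine subsingleton_of_forall_eq 0 fun e => ?_
    have hz : 𝟙 (ModuleCat.of A N) = 0 :=
      (ModuleCat.isZero_of_subsingleton (ModuleCat.of A N)).eq_of_src _ _
    rw [← Abelian.Ext.mk₀_id_comp e, hz]
    simp
  | quotient N p e =>
    by_cases hp : p.1 = maximalIdeal A
    · rw [hp] at e
      exact subsingleton_ext_of_iso e.symm.toModuleIso M r hk
    · obtain ⟨x, hx, hxp⟩ : ∃ x ∈ maximalIdeal A, x ∉ p.1 := by
        by_contra! hc
        exact hp (le_antisymm (IsLocalRing.le_maximalIdeal p.2.ne_top) hc)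
      apply subsingleton_ext_of_iso e.symm.toModuleIso M r
      apply subsingleton_ext_of_smul hx
      · have := p.2
        rw [isSMulRegular_iff_right_eq_zero_of_smul]
        intro y hy
        obtain ⟨y, rfl⟩ := Ideal.Quotient.mk_surjective y
        have h1 : Ideal.Quotient.mk p.1 (x * y) = 0 := hy
        rw [Ideal.Quotient.eq_zero_iff_mem] at h1 ⊢
        exact (this.mem_or_mem h1).resolve_left hxp
      · exact HasInjectiveDimensionLT.subsingleton M (r + 1) _ (by omega) _
  | exact N₁ N₂ N₃ f g hf hg hfg h₁ h₃ =>
    let S : ShortComplex (ModuleCat.{0} A) :=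
      ModuleCat.shortComplexOfCompEqZero f g hfg.linearMap_comp_eq_zero
    have hS : S.ShortExact := ModuleCat.shortComplex_shortExact S hfg hf hg
    refine subsingleton_of_forall_eq 0 fun e => ?_
    obtain ⟨y, hy⟩ := Abelian.Ext.contravariant_sequence_exact₂ hS M e
      (by exact Subsingleton.elim (α := Abelian.Ext (ModuleCat.of A N₁) M r) _ _)
    rw [← hy, show y = 0 from
      Subsingleton.elim (α := Abelian.Ext (ModuleCat.of A N₃) M r) _ _, Abelian.Ext.comp_zero]

lemma exists_length_ge (M : ModuleCat.{0} A) [Module.Finite A M] (r : ℕ)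
    (hr : HasInjectiveDimensionLT M (r + 1)) (hr' : ¬ HasInjectiveDimensionLT M r)
    (rs : List A) (mem : ∀ x ∈ rs, x ∈ maximalIdeal A) (reg : IsRegular A rs)
    (hmax : ∀ x ∈ maximalIdeal A, ¬ IsRegular A (rs ++ [x])) : r ≤ rs.length := by
  by_contra! hlt
  apply hr'
  obtain ⟨r, rfl⟩ : ∃ s, r = s + 1 := ⟨r - 1, by omega⟩
  apply hasInjectiveDimensionLT_of_ext_quotient
  intro I
  refine subsingleton_ext_finite M (r + 1) hr ?_ _ inferInstance
  -- the quotient by the regular sequence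
  let Q : Type := A ⧸ (Ideal.ofList rs • (⊤ : Submodule A A))
  have hpd : projectiveDimension (ModuleCat.of A Q) ≤ rs.length := by
    have := ModuleCat.projectiveDimension_quotient_eq_add_length_of_isWeaklyRegular
      (ModuleCat.of A A) rs reg.1 mem
    rw [ModuleCat.projectiveDimension_eq_zero_of_projective (ModuleCat.of A A), zero_add] at this
    exact this.le
  rw [projectiveDimension_le_iff] at hpd
  have hQ : Subsingleton (Abelian.Ext (ModuleCat.of A Q) M (r + 1)) :=
    HasProjectiveDimensionLT.subsingleton _ (rs.length + 1) _ (by omega) _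
  have hne : ¬ Subsingleton ((A ⧸ maximalIdeal A) →ₗ[A] Q) := by
    rw [IsSMulRegular.subsingleton_linearMap_iff]
    rintro ⟨x, hx, hxr⟩
    rw [Ideal.annihilator_quotient] at hx
    apply hmax x hx
    apply RingTheory.Sequence.IsRegular.of_isWeaklyRegular_of_mem_maximalIdeal
    · intro y hy
      rcases List.mem_append.1 hy with h | h
      · exact mem y h
      · simp at h; exact h ▸ hx
    · rw [isWeaklyRegular_append_iff, isWeaklyRegular_singleton_iff]
      exact ⟨reg.1, hxr⟩
  rw [not_subsingleton_iff_nontrivial] at hne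
  obtain ⟨f, hf⟩ := exists_ne (0 : (A ⧸ maximalIdeal A) →ₗ[A] Q)
  have : IsSimpleModule A (A ⧸ maximalIdeal A) :=
    isSimpleModule_iff_isCoatom.2 (maximalIdeal.isMaximal A).out
  have hinj : Function.Injective f := (LinearMap.injective_or_eq_zero f).resolve_right hf
  let S : ShortComplex (ModuleCat.{0} A) :=
    ModuleCat.shortComplexOfCompEqZero _ _ f.exact_map_mkQ_range.linearMap_comp_eq_zero
  have hS : S.ShortExact := ModuleCat.shortComplex_shortExact S
      f.exact_map_mkQ_range hinj (Submodule.mkQ_surjective _)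
  have h3 : Subsingleton (Abelian.Ext S.X₃ M (r + 1 + 1)) :=
    HasInjectiveDimensionLT.subsingleton M (r + 1 + 1) _ le_rfl _
  refine subsingleton_of_forall_eq 0 fun e => ?_
  obtain ⟨y, hy⟩ := Abelian.Ext.contravariant_sequence_exact₁ hS M e (add_comm 1 (r + 1))
    (Subsingleton.elim _ _)
  rw [← hy, show y = 0 from
      Subsingleton.elim (α := Abelian.Ext (ModuleCat.of A Q) M (r + 1)) _ _, Abelian.Ext.comp_zero]

end BassAux

/-- Bass formula: for a nonzero finitely generated module `M` of finite injective
dimension over a commutative Noetherian local ring `A`, `injdim M = depth A`. -/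
theorem stmt8 (A : Type) [CommRing A] [IsNoetherianRing A] [IsLocalRing A]
    (M : Type) [AddCommGroup M] [Module A M] [Module.Finite A M] [Nontrivial M]
    (hfin : injDim A (ModuleCat.of A M) < ⊤) :
    injDim A (ModuleCat.of A M) = depth A A := by
  classical
  have hex : ∃ n : ℕ, HasInjectiveDimensionLT (ModuleCat.of A M) (n + 1) := by
    rw [injDim, sInf_lt_iff] at hfin
    obtain ⟨n, hn, hlt⟩ := hfin
    lift n to ℕ using hlt.ne
    exact ⟨n, (BassAux.mem_iff A _ n).1 hn⟩
  let r := Nat.find hex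
  have hr : HasInjectiveDimensionLT (ModuleCat.of A M) (r + 1) := Nat.find_spec hex
  have hr' : ¬ HasInjectiveDimensionLT (ModuleCat.of A M) r := by
    intro h
    rcases Nat.eq_zero_or_pos r with h0 | h0
    · rw [h0, hasInjectiveDimensionLT_zero_iff_isZero, ModuleCat.isZero_iff_subsingleton] at h
      exact not_subsingleton M h
    · apply Nat.find_min hex (m := r - 1) (by omega)
      rwa [Nat.sub_add_cancel h0]
  have hinj : injDim A (ModuleCat.of A M) = r := by
    apply le_antisymm
    · exact sInf_le ((BassAux.mem_iff A _ r).2 hr)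
    · refine le_sInf fun n hn => ?_
      induction n with
      | top => exact le_top
      | coe n =>
        have := (BassAux.mem_iff A _ n).1 hn
        exact_mod_cast Nat.find_min' hex this
  rw [hinj]
  have : Nontrivial (ModuleCat.of A M) := ‹_›
  have : Module.Finite A (ModuleCat.of A M) := ‹_›
  have hle := BassAux.length_le (ModuleCat.of A M) r hr
  apply le_antisymm
  · let p : ℕ → Prop := fun n => ∃ rs : List A, rs.length = n ∧
      (∀ x ∈ rs, x ∈ IsLocalRing.maximalIdeal A) ∧ RingTheory.Sequence.IsRegular A rs
    have hp0 : p 0 := ⟨[], rfl, by simp, RingTheory.Sequence.IsRegular.nil A A⟩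
    obtain ⟨rs, hlen, mem, reg⟩ : p (Nat.findGreatest p r) := Nat.findGreatest_spec (Nat.zero_le r) hp0
    have hmax : ∀ x ∈ IsLocalRing.maximalIdeal A,
        ¬ RingTheory.Sequence.IsRegular A (rs ++ [x]) := by
      intro x hx hreg
      have hmem : ∀ y ∈ rs ++ [x], y ∈ IsLocalRing.maximalIdeal A := by
        intro y hy
        rcases List.mem_append.1 hy with h | h
        · exact mem y h
        · simp at h; exact h ▸ hx
      have hP : p (rs.length + 1) := ⟨rs ++ [x], by simp, hmem, hreg⟩
      have hl := hle _ hmem hreg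
      have := Nat.le_findGreatest (by simpa using hl) hP
      omega
    have := BassAux.exists_length_ge (ModuleCat.of A M) r hr hr' rs mem reg hmax
    calc (r : ℕ∞) ≤ rs.length := by exact_mod_cast this
      _ ≤ depth A A := le_sSup ⟨rs, rfl, mem, reg⟩
  · refine sSup_le ?_
    rintro n ⟨rs, rfl, mem, reg⟩
    exact_mod_cast hle rs mem reg
end

section
/- Let A be a commutative Noetherian ring, p ⊊ q prime ideals with dim (A_q / p A_q) = 1, M a finitely generated A-module, and n an integer. If Ext^n_{A_p}(κ(p), M_p) ≠ 0 then Ext^{n+1}_{A_q}(κ(q), M_q) ≠ 0. In other words, nonvanishing of the n-th Bass number μ^n(p, M) implies nonvanishing of μ^{n+1}(q, M). -/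
open CategoryTheory

lemma sub_ext_iff (R : Type) [CommRing R] (X Y : ModuleCat.{0} R) (n : ℕ) :
    Subsingleton (extModule R X Y n) ↔ Subsingleton (Abelian.Ext.{0} X Y n) := by
  let P : ProjectiveResolution X := (HasProjectiveResolution.out (Z := X)).some
  have e := P.isoExt (R := R) n Y
  have e' : Subsingleton (extModule R X Y n) ↔
      Subsingleton ((P.complex.linearYonedaObj R Y).homology n) :=
    (e.toLinearEquiv.toEquiv).subsingleton_congr
  rw [e', ← ModuleCat.isZero_iff_subsingleton, ← HomologicalComplex.exactAt_iff_isZero_homology]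
  cases n with
  | zero =>
    rw [HomologicalComplex.exactAt_iff' _ 0 0 1 (by simp) (by simp),
      ShortComplex.moduleCat_exact_iff, (Abelian.Ext.homEquiv₀ (X := X) (Y := Y)).subsingleton_congr]
    constructor
    · intro H
      refine subsingleton_of_forall_eq 0 fun a => ?_
      obtain ⟨g, hg⟩ := H (P.π.f 0 ≫ a) (by
        change P.complex.d 1 0 ≫ P.π.f 0 ≫ a = 0
        have := P.complex_d_comp_π_f_zero
        exact (Category.assoc _ _ _).symm.trans
          ((congrArg (· ≫ _) this).trans Limits.zero_comp))
      have h2 : P.complex.d 0 0 ≫ (show P.complex.X 0 ⟶ Y from g) = P.π.f 0 ≫ a := hg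
      rw [P.complex.shape _ _ (by simp), Limits.zero_comp] at h2
      have : Epi (P.π.f 0) := inferInstance
      exact (cancel_epi (P.π.f 0)).1 (h2.symm.trans Limits.comp_zero.symm)
    · intro H f hf
      refine ⟨0, ?_⟩
      have hf' : P.complex.d 1 0 ≫ (show P.complex.X 0 ⟶ Y from f) = 0 := hf
      have h1 := P.exact₀.g_desc f hf'
      have h2 : P.exact₀.desc f hf' = 0 := H.elim _ _
      rw [h2, Limits.comp_zero] at h1
      rw [map_zero]
      exact h1
  | succ n =>
    rw [HomologicalComplex.exactAt_iff' _ n (n+1) (n+2) (by simp) (by simp),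
      ShortComplex.moduleCat_exact_iff]
    constructor
    · intro H
      refine subsingleton_of_forall_eq 0 fun a => ?_
      obtain ⟨f, hf, rfl⟩ := P.extMk_surjective a (n+2) rfl
      rw [P.extMk_eq_zero_iff _ _ _ _ n rfl]
      exact H f hf
    · intro H f hf
      exact (P.extMk_eq_zero_iff f (n+2) rfl hf n rfl).1 (Subsingleton.elim _ _)

lemma shortExact_mk (R : Type) [CommRing R] {K F L : Type} [AddCommGroup K] [Module R K]
    [AddCommGroup F] [Module R F] [AddCommGroup L] [Module R L] (f : K →ₗ[R] F) (g : F →ₗ[R] L)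
    (hf : Function.Injective f) (hg : Function.Surjective g) (h : Function.Exact f g) :
    ∃ S : ShortComplex (ModuleCat.{0} R), ∃ (_ : S.ShortExact), S =
      ModuleCat.shortComplexOfCompEqZero f g h.linearMap_comp_eq_zero :=
  ⟨_, ModuleCat.shortComplex_shortExact _ h hf hg, rfl⟩

open TensorProduct in
lemma ext_loc (R R' : Type) [CommRing R] [IsNoetherianRing R] [CommRing R'] [Algebra R R']
    (S : Submonoid R) [IsLocalization S R']
    (N N' : Type) [AddCommGroup N] [Module R N] [AddCommGroup N'] [Module R N'] [Module R' N']
    [IsScalarTower R R' N'] (fN : N →ₗ[R] N') [IsLocalizedModule S fN] (n : ℕ)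
    (L L' : Type) [AddCommGroup L] [Module R L] [Module.Finite R L]
    [AddCommGroup L'] [Module R L'] [Module R' L']
    [IsScalarTower R R' L'] (fL : L →ₗ[R] L') [IsLocalizedModule S fL]
    (H : Subsingleton (Abelian.Ext.{0} (ModuleCat.of R L) (ModuleCat.of R N) n)) :
    Subsingleton (Abelian.Ext.{0} (ModuleCat.of R' L') (ModuleCat.of R' N') n) := by
  have hu (s : S) : IsUnit (algebraMap R (Module.End R N') s) := IsLocalizedModule.map_units fN s
  have key (K K' : Type) [AddCommGroup K] [Module R K] [Module.Finite R K]
      [AddCommGroup K'] [Module R K'] [Module R' K']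
      [IsScalarTower R R' K'] (fK : K →ₗ[R] K') [IsLocalizedModule S fK] (g : K' →ₗ[R'] N') :
      ∃ (h : K →ₗ[R] N) (u : R'), g = u • IsLocalizedModule.mapExtendScalars S fK fN R' h := by
    have := Module.finitePresentation_of_finite R K
    obtain ⟨h, s, hs⟩ := Module.FinitePresentation.exists_lift_of_isLocalizedModule S fN
      ((g.restrictScalars R) ∘ₗ fK)
    refine ⟨h, IsLocalization.mk' R' 1 s, ?_⟩
    have h1 : (IsLocalizedModule.mapExtendScalars S fK fN R' h).restrictScalars R =
        (s : R) • g.restrictScalars R := by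
      apply IsLocalizedModule.ext S fK hu
      ext x
      have := LinearMap.congr_fun hs x
      simpa [IsLocalizedModule.map_apply, Submonoid.smul_def] using this
    ext x
    have h2 := LinearMap.congr_fun h1 x
    simp only [LinearMap.coe_restrictScalars, LinearMap.smul_apply] at h2 ⊢
    rw [h2, ← algebraMap_smul R' (s : R), smul_smul, IsLocalization.mk'_spec, map_one, one_smul]
  induction n generalizing L L' with
  | zero =>
    rw [(Abelian.Ext.homEquiv₀).subsingleton_congr] at H ⊢
    refine subsingleton_of_forall_eq 0 fun a => ?_
    obtain ⟨h, u, hh⟩ := key L L' fL a.hom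
    have : ModuleCat.ofHom h = 0 := H.elim _ _
    have h0 : h = 0 := by simpa using congrArg ModuleCat.Hom.hom this
    ext1
    rw [hh, h0, map_zero, smul_zero]; rfl
  | succ n ih =>
    obtain ⟨F, _, _, _, _, f, hf⟩ := Module.exists_finite_presentation R L
    let K := LinearMap.ker f
    let ι : K →ₗ[R] F := K.subtype
    let fF := TensorProduct.mk R R' F 1
    let fK := TensorProduct.mk R R' K 1
    have : IsLocalizedModule S fF := inferInstance
    have : IsLocalizedModule S fK := inferInstance
    have ex : Function.Exact ι f := f.exact_subtype_ker_map
    have ex' := IsLocalizedModule.map_exact S fK fF fL ι f ex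
    obtain ⟨T, hT, rfl⟩ := shortExact_mk R ι f K.injective_subtype hf ex
    obtain ⟨T', hT', rfl⟩ := shortExact_mk R' (IsLocalizedModule.mapExtendScalars S fK fF R' ι)
      (IsLocalizedModule.mapExtendScalars S fF fL R' f)
      (IsLocalizedModule.map_injective S fK fF ι K.injective_subtype)
      (IsLocalizedModule.map_surjective S fF fL f hf) ex'
    have p1 : Projective (ModuleCat.of R F) := inferInstance
    have p2 : Projective (ModuleCat.of R' (R' ⊗[R] F)) := inferInstance
    refine subsingleton_of_forall_eq 0 fun a => ?_
    obtain ⟨b, rfl⟩ := Abelian.Ext.contravariant_sequence_exact₃ hT' (ModuleCat.of R' N') a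
      (Abelian.Ext.eq_zero_of_projective (P := ModuleCat.of R' (R' ⊗[R] F)) _) (add_comm 1 n)
    have hex (c : Abelian.Ext.{0} (ModuleCat.of R K) (ModuleCat.of R N) n) :=
      Abelian.Ext.contravariant_sequence_exact₁ hT (ModuleCat.of R N) c (add_comm 1 n)
        (H.elim _ _)
    cases n with
    | succ n =>
      have : Subsingleton (Abelian.Ext.{0} (ModuleCat.of R K) (ModuleCat.of R N) (n+1)) := by
        refine subsingleton_of_forall_eq 0 fun c => ?_
        obtain ⟨d, rfl⟩ := hex c
        rw [Abelian.Ext.eq_zero_of_projective (P := ModuleCat.of R F) d]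
        exact Abelian.Ext.comp_zero ..
      have := ih K (R' ⊗[R] K) fK this
      rw [this.elim b 0]
      exact Abelian.Ext.comp_zero ..
    | zero =>
      obtain ⟨b, rfl⟩ := Abelian.Ext.homEquiv₀.symm.surjective b
      obtain ⟨h, u, hh⟩ := key K (R' ⊗[R] K) fK b.hom
      obtain ⟨d, hd⟩ := hex (Abelian.Ext.mk₀ (ModuleCat.ofHom h))
      obtain ⟨d, rfl⟩ := Abelian.Ext.homEquiv₀.symm.surjective d
      have hd2 : ModuleCat.ofHom ι ≫ d = ModuleCat.ofHom h := by
        apply Abelian.Ext.homEquiv₀.symm.injective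
        exact (Abelian.Ext.mk₀_comp_mk₀ (ModuleCat.ofHom ι) d).symm.trans hd
      have hd3 : h = d.hom ∘ₗ ι := (congrArg ModuleCat.Hom.hom hd2).symm
      have hb : b = ModuleCat.ofHom (IsLocalizedModule.mapExtendScalars S fK fF R' ι) ≫
          ModuleCat.ofHom (u • IsLocalizedModule.mapExtendScalars S fF fN R' d.hom) := by
        ext1
        rw [hh, hd3]
        have := IsLocalizedModule.map_comp' S fK fF fN ι d.hom
        refine LinearMap.ext fun x => ?_
        have := LinearMap.congr_fun this x
        exact congrArg (u • ·) this
      have : Abelian.Ext.homEquiv₀.symm b = (Abelian.Ext.mk₀ (ModuleCat.ofHom (IsLocalizedModule.mapExtendScalars S fK fF R' ι))).comp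
          (Abelian.Ext.mk₀ (ModuleCat.ofHom (u • IsLocalizedModule.mapExtendScalars S fF fN R' d.hom))) (zero_add 0) := by
        rw [Abelian.Ext.mk₀_comp_mk₀, ← hb]; rfl
      rw [this]
      exact hT'.extClass_comp_assoc _

/-- Vanishing of `Ext(-, N)` on all finite modules killed by `I`, if every prime above `I`
is the maximal ideal. -/
lemma ext_finlen (R : Type) [CommRing R] [IsNoetherianRing R] [IsLocalRing R] (I : Ideal R)
    (hI : ∀ P : Ideal R, P.IsPrime → I ≤ P → P = IsLocalRing.maximalIdeal R)
    (N : ModuleCat.{0} R) (n : ℕ)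
    (H : Subsingleton (Abelian.Ext.{0} (ModuleCat.of R (IsLocalRing.ResidueField R)) N n))
    (L : Type) [AddCommGroup L] [Module R L] [hL : Module.Finite R L]
    (hIL : I ≤ Module.annihilator R L) :
    Subsingleton (Abelian.Ext.{0} (ModuleCat.of R L) N n) := by
  revert hIL
  induction hL using IsNoetherianRing.induction_on_isQuotientEquivQuotientPrime R with
  | subsingleton L =>
    intro _
    have : Limits.IsZero (ModuleCat.of R L) := ModuleCat.isZero_of_subsingleton _
    refine subsingleton_of_forall_eq 0 fun a => ?_
    rw [← Abelian.Ext.mk₀_id_comp a, this.eq_zero_of_src (𝟙 _), Abelian.Ext.mk₀_zero,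
      Abelian.Ext.zero_comp]
  | quotient L P e =>
    intro h
    have hP : P.1 = IsLocalRing.maximalIdeal R := by
      apply hI _ P.2
      rwa [e.annihilator_eq, Ideal.annihilator_quotient] at h
    let e2 : ModuleCat.of R L ≅ ModuleCat.of R (IsLocalRing.ResidueField R) :=
      (e.trans (Submodule.quotEquivOfEq _ _ hP)).toModuleIso
    refine subsingleton_of_forall_eq 0 fun a => ?_
    rw [← Abelian.Ext.mk₀_id_comp a, ← e2.hom_inv_id, ← Abelian.Ext.mk₀_comp_mk₀,
      Abelian.Ext.comp_assoc_of_second_deg_zero,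
      H.elim ((Abelian.Ext.mk₀ e2.inv).comp a (zero_add n)) 0, Abelian.Ext.comp_zero]
  | exact L₁ L₂ L₃ f g hf hg hfg h₁ h₃ =>
    intro h
    have h₁ := h₁ (h.trans (LinearMap.annihilator_le_of_injective f hf))
    have h₃ := h₃ (h.trans (LinearMap.annihilator_le_of_surjective g hg))
    obtain ⟨T, hT, rfl⟩ := shortExact_mk R f g hf hg hfg
    refine subsingleton_of_forall_eq 0 fun a => ?_
    obtain ⟨b, rfl⟩ := Abelian.Ext.contravariant_sequence_exact₂ hT N a (h₁.elim _ _)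
    rw [h₃.elim b 0]
    exact Abelian.Ext.comp_zero ..

open Pointwise in
lemma ext_one_up (R : Type) [CommRing R] [IsNoetherianRing R] [IsLocalRing R] (P : Ideal R)
    [P.IsPrime] (hP : P < IsLocalRing.maximalIdeal R)
    (hdim : ∀ Q : Ideal R, Q.IsPrime → P < Q → Q = IsLocalRing.maximalIdeal R)
    (N : ModuleCat.{0} R) [Module.Finite R N] (n : ℕ)
    (H : Subsingleton (Abelian.Ext.{0} (ModuleCat.of R (IsLocalRing.ResidueField R)) N (n + 1))) :
    Subsingleton (Abelian.Ext.{0} (ModuleCat.of R (R ⧸ P)) N n) := by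
  obtain ⟨x, hxm, hxP⟩ := SetLike.exists_of_lt hP
  have reg : IsSMulRegular (ModuleCat.of R (R ⧸ P)) x := by
    rw [isSMulRegular_iff_right_eq_zero_of_smul]
    intro y hy
    obtain ⟨y, rfl⟩ := Ideal.Quotient.mk_surjective y
    have : (Ideal.Quotient.mk P) (x * y) = 0 := hy
    rw [Ideal.Quotient.eq_zero_iff_mem] at this ⊢
    exact ((inferInstance : P.IsPrime).mem_or_mem this).resolve_left hxP
  have hS := reg.smulShortComplex_shortExact
  have h3 : Subsingleton (Abelian.Ext.{0} (ModuleCat.of R (QuotSMulTop x (R ⧸ P))) N (n+1)) := by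
    apply ext_finlen R (P ⊔ Ideal.span {x}) ?_ N (n+1) H
    · rw [sup_le_iff]
      constructor
      · refine le_trans ?_ (LinearMap.annihilator_le_of_surjective
          (x • (⊤ : Submodule R (R ⧸ P))).mkQ (Submodule.mkQ_surjective _))
        rw [Ideal.annihilator_quotient]
      · rw [Ideal.span_le, Set.singleton_subset_iff, SetLike.mem_coe, Module.mem_annihilator]
        intro y
        obtain ⟨y, rfl⟩ := Submodule.mkQ_surjective _ y
        rw [← map_smul, Submodule.mkQ_apply, Submodule.Quotient.mk_eq_zero]
        exact Submodule.smul_mem_pointwise_smul _ _ _ trivial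
    · intro Q hQ hle
      refine hdim Q hQ (lt_of_le_of_ne (le_sup_left.trans hle) ?_)
      rintro rfl
      exact hxP (hle (Ideal.mem_sup_right (Ideal.mem_span_singleton_self x)))
  have hsmul (a : Abelian.Ext.{0} (ModuleCat.of R (R ⧸ P)) N n) : ∃ b, a = x • b := by
    obtain ⟨b, hb⟩ := Abelian.Ext.contravariant_sequence_exact₁ hS N a (add_comm 1 n)
      (h3.elim _ _)
    refine ⟨b, ?_⟩
    rw [← hb]
    have h5 : (Abelian.Ext.mk₀ (x • 𝟙 (ModuleCat.of R (R ⧸ P)))).comp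
        (show Abelian.Ext.{0} (ModuleCat.of R (R ⧸ P)) N n from b) (zero_add n) = x • b := by
      rw [Abelian.Ext.mk₀_smul, Abelian.Ext.smul_comp, Abelian.Ext.mk₀_id_comp]
      rfl
    exact h5
  have : (⊤ : Submodule R (Abelian.Ext.{0} (ModuleCat.of R (R ⧸ P)) N n)) = ⊥ := by
    apply Submodule.eq_bot_of_le_smul_of_le_jacobson_bot (IsLocalRing.maximalIdeal R)
    · exact Module.Finite.fg_top
    · intro a _
      obtain ⟨b, rfl⟩ := hsmul a
      exact Submodule.smul_mem_smul hxm trivial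
    · rw [IsLocalRing.jacobson_eq_maximalIdeal _ bot_ne_top]
  exact (Submodule.subsingleton_iff R).1 (subsingleton_of_bot_eq_top this.symm)

/-- The 'one up' lemma for Bass numbers: if `p ⊊ q` are primes with
`dim(A_q/pA_q) = 1` and `Ext^n_{A_p}(κ(p), M_p) ≠ 0`, then
`Ext^{n+1}_{A_q}(κ(q), M_q) ≠ 0`. -/
theorem stmt9 (A : Type) [CommRing A] [IsNoetherianRing A]
    (p q : Ideal A) [p.IsPrime] [q.IsPrime] (hpq : p < q)
    (hdim : ringKrullDim
      (Localization.AtPrime q ⧸ p.map (algebraMap A (Localization.AtPrime q))) = 1)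
    (M : Type) [AddCommGroup M] [Module A M] [Module.Finite A M] (n : ℕ)
    (h : Nontrivial (extModule (Localization.AtPrime p)
      (ModuleCat.of _ (IsLocalRing.ResidueField (Localization.AtPrime p)))
      (ModuleCat.of _ (LocalizedModule p.primeCompl M)) n)) :
    Nontrivial (extModule (Localization.AtPrime q)
      (ModuleCat.of _ (IsLocalRing.ResidueField (Localization.AtPrime q)))
      (ModuleCat.of _ (LocalizedModule q.primeCompl M)) (n + 1)) := by
  by_contra hcon
  rw [not_nontrivial_iff_subsingleton, sub_ext_iff] at hcon
  rw [← not_subsingleton_iff_nontrivial, sub_ext_iff] at h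
  apply h
  clear h
  let R := Localization.AtPrime q
  let R' := Localization.AtPrime p
  let P : Ideal R := p.map (algebraMap A R)
  have hle : q.primeCompl ≤ p.primeCompl := fun x hx hxp => hx (hpq.le hxp)
  have hdisj : Disjoint (q.primeCompl : Set A) (p : Set A) :=
    Set.disjoint_left.2 fun x hx hxp => hle hx hxp
  have hPp : P.IsPrime := IsLocalization.isPrime_of_isPrime_disjoint q.primeCompl R p ‹_› hdisj
  have hcomap : P.under A = p :=
    IsLocalization.under_map_of_isPrime_disjoint q.primeCompl R ‹_› hdisj
  have hPm : P < IsLocalRing.maximalIdeal R := by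
    refine lt_of_le_of_ne (IsLocalRing.le_maximalIdeal hPp.ne_top) fun he => ?_
    have := IsLocalization.AtPrime.under_maximalIdeal R q
    rw [← he, hcomap] at this
    exact hpq.ne this
  have hQ : ∀ Q : Ideal R, Q.IsPrime → P < Q → Q = IsLocalRing.maximalIdeal R := by
    intro Q hQ hPQ
    have : Ring.KrullDimLE 1 (R ⧸ P) := by
      rw [Ring.krullDimLE_iff]; exact hdim.le
    have hker : RingHom.ker (Ideal.Quotient.mk P) ≤ Q := by rw [Ideal.mk_ker]; exact hPQ.le
    have h1 : (Q.map (Ideal.Quotient.mk P)).IsPrime :=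
      Ideal.map_isPrime_of_surjective Ideal.Quotient.mk_surjective hker
    have h2 : Q.map (Ideal.Quotient.mk P) ≠ ⊥ := by
      intro hb
      rw [Ideal.map_eq_bot_iff_le_ker, Ideal.mk_ker] at hb
      exact absurd hPQ (not_lt_of_ge hb)
    have h3 : (Q.map (Ideal.Quotient.mk P)).IsMaximal := Ideal.IsPrime.isMaximal_of_ne_bot h1 h2
    have h4 := Ideal.comap_isMaximal_of_surjective _ (Ideal.Quotient.mk_surjective (I := P)) (K := Q.map (Ideal.Quotient.mk P))
    rw [Ideal.comap_map_of_surjective' _ Ideal.Quotient.mk_surjective, sup_eq_left.2 hker] at h4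
    exact IsLocalRing.eq_maximalIdeal h4
  have main := ext_one_up R P hPm hQ (ModuleCat.of R (LocalizedModule q.primeCompl M)) n hcon
  let : Algebra R R' := IsLocalization.localizationAlgebraOfSubmonoidLe R R' q.primeCompl p.primeCompl hle
  have : IsScalarTower A R R' :=
    IsLocalization.localization_isScalarTower_of_submonoid_le R R' q.primeCompl p.primeCompl hle
  let S : Submonoid R := p.primeCompl.map (algebraMap A R)
  have : IsLocalization S R' :=
    IsLocalization.isLocalization_of_submonoid_le R R' q.primeCompl p.primeCompl hle
  let N := LocalizedModule q.primeCompl M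
  let N' := LocalizedModule p.primeCompl M
  let : Module R N' := Module.compHom N' (algebraMap R R')
  have : IsScalarTower R R' N' := IsScalarTower.of_algebraMap_smul fun r x => rfl
  have : IsScalarTower A R N' := IsScalarTower.of_algebraMap_smul fun r x => by
    change algebraMap R R' (algebraMap A R r) • x = r • x
    rw [← IsScalarTower.algebraMap_apply, algebraMap_smul]
  have hN : IsBaseChange R (LocalizedModule.mkLinearMap q.primeCompl M) :=
    (isLocalizedModule_iff_isBaseChange q.primeCompl R _).1 inferInstance
  have hN' : IsBaseChange R' (LocalizedModule.mkLinearMap p.primeCompl M) :=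
    (isLocalizedModule_iff_isBaseChange p.primeCompl R' _).1 inferInstance
  let fN : N →ₗ[R] N' := hN.lift (LocalizedModule.mkLinearMap p.primeCompl M)
  have : IsLocalizedModule S fN := by
    rw [isLocalizedModule_iff_isBaseChange S R']
    apply hN.of_comp
    rw [IsBaseChange.lift_comp]
    exact hN'
  let L' := R' ⧸ P.localized' R' S (Algebra.linearMap R R')
  have hmain := ext_loc R R' S N N' fN n (R ⧸ P) L' (P.toLocalizedQuotient' R' S (Algebra.linearMap R R')) main
  have heq : P.localized' R' S (Algebra.linearMap R R') = IsLocalRing.maximalIdeal R' := by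
    rw [Ideal.localized'_eq_map, ← IsLocalization.AtPrime.map_eq_maximalIdeal p R', Ideal.map_map,
      ← IsScalarTower.algebraMap_eq]
  let e2 : ModuleCat.of R' (IsLocalRing.ResidueField R') ≅ ModuleCat.of R' L' :=
    (Submodule.quotEquivOfEq _ _ heq.symm).toModuleIso
  refine subsingleton_of_forall_eq 0 fun a => ?_
  rw [← Abelian.Ext.mk₀_id_comp a, ← e2.hom_inv_id, ← Abelian.Ext.mk₀_comp_mk₀,
      Abelian.Ext.comp_assoc_of_second_deg_zero,
      hmain.elim ((Abelian.Ext.mk₀ e2.inv).comp a (zero_add n)) 0, Abelian.Ext.comp_zero]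
end

section
/- Let A be a commutative Noetherian local ring with maximal ideal m and residue field k. Then A is Gorenstein (i.e., injdim_A A < ∞) if and only if Ext^n_A(k, A) ≅ k for n = dim A and Ext^n_A(k, A) = 0 for n ≠ dim A. -/
open CategoryTheory

namespace BassAux
section
open CategoryTheory Abelian CochainComplex HomComplex
variable {A : Type} [CommRing A]

lemma extMk_eq_zero {X Y : ModuleCat.{0} A} (R : ProjectiveResolution X)
    (f : R.complex.X 0 ⟶ Y) (hf : R.complex.d 1 0 ≫ f = 0)
    (h : R.extMk f 1 rfl hf = 0) : f = 0 := by
  have hz : Limits.IsZero (R.cochainComplex.X 1) :=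
    R.cochainComplex.isZero_of_isStrictlyLE 0 1 (by simp)
  rw [← R.extEquivCohomologyClass.apply_eq_iff_eq,
    R.extEquivCohomologyClass_extMk, R.extEquivCohomologyClass_zero,
    CohomologyClass.mk_eq_zero_iff,
    Cocycle.toSingleMk_mem_coboundaries_iff _ _ _ _ _ 1 (by simp)] at h
  obtain ⟨g, hg⟩ := h
  rw [hz.eq_of_src g 0, Limits.comp_zero] at hg
  rw [← cancel_epi (R.cochainComplexXIso (-(0 : ℕ)) 0 rfl).hom, Limits.comp_zero]
  exact hg.symm

lemma compare (M N : ModuleCat.{0} A) (n : ℕ) :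
    Nonempty (extModule A M N n ≃ₗ[A] Abelian.Ext M N n) := by
  let P : ProjectiveResolution M := ProjectiveResolution.of M
  let K := P.complex.linearYonedaObj A N
  let S := K.sc' ((ComplexShape.up ℕ).prev n) n (n + 1)
  let e : extModule A M N n ≅ S.moduleCatLeftHomologyData.H :=
    P.isoExt n N ≪≫ ShortComplex.homologyMapIso (K.isoSc' _ n (n + 1) rfl (by simp)) ≪≫
      S.moduleCatHomologyIso
  have hg : ∀ f : P.complex.X n ⟶ N, f ∈ LinearMap.ker S.g.hom ↔ P.complex.d (n + 1) n ≫ f = 0 :=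
    fun f => Iff.rfl
  let φ : LinearMap.ker S.g.hom →ₗ[A] Abelian.Ext M N n :=
    { toFun := fun f => P.extMk (show P.complex.X n ⟶ N from f.1) (n + 1) rfl ((hg _).mp f.2)
      map_add' := fun f g => (P.add_extMk _ _ _ _ _ _).symm
      map_smul' := fun r f => by
        have h := P.extMk_comp_mk₀ (show P.complex.X n ⟶ N from f.1) (n + 1) rfl ((hg _).mp f.2)
          (r • 𝟙 N)
        have h2 : (show P.complex.X n ⟶ N from f.1) ≫ (r • 𝟙 N) =
            (show P.complex.X n ⟶ N from (r • f).1) := by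
          rw [Linear.comp_smul, Category.comp_id]; rfl
        simp only [h2] at h
        rw [← h]
        simp [Ext.mk₀_smul] }
  have hφ : Function.Surjective φ := by
    intro α
    obtain ⟨f, hf, rfl⟩ := P.extMk_surjective α (n + 1) rfl
    exact ⟨⟨f, (hg f).mpr hf⟩, rfl⟩
  have hker : LinearMap.range S.moduleCatToCycles = LinearMap.ker φ := by
    ext ⟨f, hf⟩
    rw [LinearMap.mem_ker]
    change _ ↔ P.extMk (show P.complex.X n ⟶ N from f) (n + 1) rfl ((hg _).mp hf) = 0
    have hr : (⟨f, hf⟩ : LinearMap.ker S.g.hom) ∈ LinearMap.range S.moduleCatToCycles ↔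
        ∃ g : P.complex.X ((ComplexShape.up ℕ).prev n) ⟶ N,
          P.complex.d n ((ComplexShape.up ℕ).prev n) ≫ g = (show P.complex.X n ⟶ N from f) := by
      constructor
      · rintro ⟨g, hg⟩
        exact ⟨g, congrArg Subtype.val hg⟩
      · rintro ⟨g, hg⟩
        exact ⟨g, Subtype.ext hg⟩
    rw [hr]
    cases n with
    | zero =>
      constructor
      · rintro ⟨g, hg⟩
        rw [P.complex.shape _ _ (by simp), Limits.zero_comp] at hg
        simp only [← hg]
        exact P.extMk_zero _ _
      · intro h
        exact ⟨0, by rw [extMk_eq_zero P _ _ h, Limits.comp_zero]⟩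
    | succ p =>
      rw [P.extMk_eq_zero_iff _ _ _ _ p rfl]
      have : (ComplexShape.up ℕ).prev (p + 1) = p := by simp
      rw [this]
  exact ⟨e.toLinearEquiv.trans ((Submodule.quotEquivOfEq _ _ hker).trans
    (φ.quotKerEquivOfSurjective hφ))⟩

end
end BassAux

namespace BassAux

open CategoryTheory Abelian IsLocalRing Pointwise

variable {A : Type} [CommRing A]

lemma subsing_mid {S : ShortComplex (ModuleCat.{0} A)} (hS : S.ShortExact) (Y : ModuleCat.{0} A)
    (n : ℕ) (h1 : Subsingleton (Ext S.X₁ Y n)) (h3 : Subsingleton (Ext S.X₃ Y n)) :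
    Subsingleton (Ext S.X₂ Y n) := by
  refine subsingleton_of_forall_eq 0 fun x => ?_
  obtain ⟨y, rfl⟩ := Ext.contravariant_sequence_exact₂ hS Y x (Subsingleton.elim _ _)
  rw [Subsingleton.elim y 0]; simp

lemma surj_of_regular {N Y : ModuleCat.{0} A} {x : A}
    (hx : IsSMulRegular N x) (n : ℕ)
    (h : Subsingleton (Ext (ModuleCat.of A (QuotSMulTop x N)) Y (n + 1))) (e : Ext N Y n) :
    ∃ e' : Ext N Y n, x • e' = e := by
  have hS := hx.smulShortComplex_shortExact
  obtain ⟨y, hy⟩ := Ext.contravariant_sequence_exact₁ hS Y e (add_comm 1 n)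
    (Subsingleton.elim (α := Ext (ModuleCat.of A (QuotSMulTop x N)) Y (n + 1)) _ _)
  have key : ∀ z : Ext N Y n, x • z = (Ext.mk₀ (x • 𝟙 N)).comp z (zero_add n) := by
    intro z
    simp [Ext.mk₀_smul]
  exact ⟨y, (key y).trans hy⟩

lemma ext_congr {N N' : ModuleCat.{0} A} (f : N ≃ₗ[A] N') (Y : ModuleCat.{0} A) (n : ℕ)
    (h : Subsingleton (Ext N' Y n)) : Subsingleton (Ext N Y n) := by
  refine subsingleton_of_forall_eq 0 fun x => ?_
  have : x = (Ext.mk₀ f.toModuleIso.hom).comp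
    ((Ext.mk₀ f.toModuleIso.inv).comp x (zero_add n)) (zero_add n) := by
    rw [Ext.mk₀_comp_mk₀_assoc, Iso.hom_inv_id, Ext.mk₀_id_comp]
  rw [this, Subsingleton.elim ((Ext.mk₀ f.toModuleIso.inv).comp x (zero_add n)) 0]; simp

lemma injdim (d : ℕ) : ∀ (Y : ModuleCat.{0} A)
    (_ : ∀ I : Ideal A, Subsingleton (Ext (ModuleCat.of A (A ⧸ I)) Y (d + 1))),
    HasInjectiveDimensionLT Y (d + 1) := by
  induction d with
  | zero =>
    intro Y h
    simp only [zero_add]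
    rw [← injective_iff_hasInjectiveDimensionLT_one, ← Module.injective_iff_injective_object,
      ← Module.Baer.iff_injective]
    intro I g
    have hS := ModuleCat.shortComplex_shortExact
      (ModuleCat.shortComplexOfCompEqZero I.subtype I.mkQ
        (LinearMap.exact_subtype_mkQ I).linearMap_comp_eq_zero) (LinearMap.exact_subtype_mkQ I)
        I.subtype_injective I.mkQ_surjective
    obtain ⟨y, hy⟩ := Ext.contravariant_sequence_exact₁ hS Y (n₀ := 0) (n₁ := 1)
      (Ext.mk₀ (ModuleCat.ofHom g : ModuleCat.of A I ⟶ Y)) rfl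
      (Subsingleton.elim (α := Ext (ModuleCat.of A (A ⧸ I)) Y (0 + 1)) _ _)
    obtain ⟨y, rfl⟩ := (Ext.mk₀_bijective _ _).2 y
    rw [Ext.mk₀_comp_mk₀, (Ext.mk₀_bijective _ _).1.eq_iff] at hy
    refine ⟨y.hom, fun x mem => ?_⟩
    exact congrArg (fun z : ModuleCat.of A I ⟶ Y => ModuleCat.Hom.hom z (⟨x, mem⟩ : I)) hy
  | succ d ih =>
    intro Y h
    obtain ⟨J, inj, f, monof⟩ := EnoughInjectives.presentation Y
    let S := ShortComplex.mk f (Limits.cokernel.π f) (Limits.cokernel.condition f)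
    have hS : S.ShortExact := { exact := ShortComplex.exact_cokernel f }
    rw [← hS.hasInjectiveDimensionLT_X₃_iff d inj]
    refine ih _ fun I => subsingleton_of_forall_eq 0 fun x => ?_
    obtain ⟨y, rfl⟩ := Ext.covariant_sequence_exact₃ _ hS x rfl
      (@Subsingleton.elim _ (h I) _ _)
    have : Injective S.X₂ := inj
    rw [Ext.eq_zero_of_injective y]; simp

lemma vanish_right {S : ShortComplex (ModuleCat.{0} A)} (hS : S.ShortExact) (Y : ModuleCat.{0} A)
    (n : ℕ) (h1 : Subsingleton (Ext S.X₁ Y n)) (h2 : Subsingleton (Ext S.X₂ Y (n + 1))) :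
    Subsingleton (Ext S.X₃ Y (n + 1)) := by
  refine subsingleton_of_forall_eq 0 fun e => ?_
  obtain ⟨y, rfl⟩ := Ext.contravariant_sequence_exact₃ hS Y e (Subsingleton.elim _ _)
    (add_comm 1 n)
  rw [Subsingleton.elim y 0]; simp

lemma cyclic_right {S : ShortComplex (ModuleCat.{0} A)} (hS : S.ShortExact) (Y : ModuleCat.{0} A)
    (n : ℕ) (h1 : ∃ f : A →ₗ[A] Ext S.X₁ Y n, Function.Surjective f)
    (h2 : Subsingleton (Ext S.X₂ Y (n + 1))) :
    ∃ f : A →ₗ[A] Ext S.X₃ Y (n + 1), Function.Surjective f := by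
  obtain ⟨f, hf⟩ := h1
  refine ⟨(hS.extClass.precompOfLinear A Y (add_comm 1 n)) ∘ₗ f, ?_⟩
  rw [LinearMap.coe_comp]
  refine Function.Surjective.comp ?_ hf
  intro e
  exact Ext.contravariant_sequence_exact₃ hS Y e (Subsingleton.elim _ _) (add_comm 1 n)

lemma koszul (Y : ModuleCat.{0} A) (rs : List A) : ∀ (M : ModuleCat.{0} A) (j : ℕ),
    RingTheory.Sequence.IsWeaklyRegular M rs →
    (∀ i, j < i → Subsingleton (Ext M Y i)) →
    (∃ f : A →ₗ[A] Ext M Y j, Function.Surjective f) →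
    ∃ Q : ModuleCat.{0} A, Nonempty (Q ≃ₗ[A] (M ⧸ (Ideal.ofList rs • ⊤ : Submodule A M))) ∧ 
    (∀ i, j + rs.length < i → Subsingleton (Ext Q Y i)) ∧
    (∃ f : A →ₗ[A] Ext Q Y (j + rs.length), Function.Surjective f) := by
  induction rs with
  | nil =>
    intro M j _ h1 h2
    refine ⟨M, ⟨?_⟩, h1, h2⟩
    exact (Submodule.quotEquivOfEqBot _ (by simp)).symm
  | cons x rs ih =>
    intro M j hreg h1 h2
    rw [RingTheory.Sequence.isWeaklyRegular_cons_iff] at hreg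
    have hS := hreg.1.smulShortComplex_shortExact
    have hA : ∀ i, j + 1 < i → Subsingleton (Ext (ModuleCat.of A (QuotSMulTop x M)) Y i) := by
      intro i hi
      obtain ⟨i, rfl⟩ : ∃ k, i = k + 1 := ⟨i - 1, by omega⟩
      exact vanish_right hS Y i (h1 i (by omega)) (h1 (i + 1) (by omega))
    have hB : ∃ f : A →ₗ[A] Ext (ModuleCat.of A (QuotSMulTop x M)) Y (j + 1),
        Function.Surjective f := by
      exact cyclic_right hS Y j h2 (h1 (j + 1) (by omega))
    obtain ⟨Q, ⟨e⟩, h3, h4⟩ := ih (ModuleCat.of A (QuotSMulTop x M)) (j + 1) hreg.2 hA hB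
    · refine ⟨Q, ⟨e.trans (Submodule.quotOfListConsSMulTopEquivQuotSMulTopInner M x rs).symm⟩, ?_, ?_⟩
      · intro i hi
        exact h3 i (by simp at hi; omega)
      · have : j + (x :: rs).length = j + 1 + rs.length := by simp; omega
        rw [this]; exact h4

variable [IsNoetherianRing A] [IsLocalRing A]

lemma nak {N Y : ModuleCat.{0} A} [Module.Finite A N] [Module.Finite A Y] {x : A}
    (hxm : x ∈ maximalIdeal A)
    (hx : IsSMulRegular N x) (n : ℕ)
    (h : Subsingleton (Ext (ModuleCat.of A (QuotSMulTop x N)) Y (n + 1))) :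
    Subsingleton (Ext N Y n) := by
  by_contra hn
  rw [not_subsingleton_iff_nontrivial] at hn
  have := Submodule.top_ne_pointwise_smul_of_mem_jacobson_annihilator (M := Ext N Y n)
    (maximalIdeal_le_jacobson (Module.annihilator A (Ext N Y n)) hxm)
  apply this
  symm
  rw [eq_top_iff]
  intro e _
  obtain ⟨e', he⟩ := surj_of_regular hx n h e
  rw [Submodule.mem_smul_pointwise_iff_exists]
  exact ⟨e', trivial, he⟩

lemma vanish (Y : ModuleCat.{0} A) [Module.Finite A Y] (d : ℕ)
    (h : ∀ n, d ≤ n → Subsingleton (Ext (ModuleCat.of A (ResidueField A)) Y n)) (I : Ideal A) :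
    ∀ (N : Type) [AddCommGroup N] [Module A N] [Module.Finite A N],
      I ≤ Module.annihilator A N → ∀ n, d ≤ n → Subsingleton (Ext (ModuleCat.of A N) Y n) := by
  induction I using WellFoundedGT.induction with
  | _ I ih =>
  intro N _ _ hN
  induction ‹Module.Finite A N› using
    IsNoetherianRing.induction_on_isQuotientEquivQuotientPrime A with
  | subsingleton N =>
    intro _ n _
    have : Limits.IsZero (ModuleCat.of A N) := ModuleCat.isZero_of_subsingleton _
    refine subsingleton_of_forall_eq 0 fun x => ?_
    have := Ext.mk₀_id_comp x
    rw [← this, (Limits.IsZero.iff_id_eq_zero _).mp ‹_›]; simp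
  | quotient N p f =>
    intro hI n hn
    by_cases hp : maximalIdeal A ≤ p.1
    · have : maximalIdeal A = p.1 := (maximalIdeal.isMaximal A).eq_of_le p.2.ne_top hp
      refine ext_congr (N' := ModuleCat.of A (ResidueField A)) ?_ Y n (h n hn)
      exact f.trans (Submodule.quotEquivOfEq _ _ this.symm)
    · obtain ⟨x, hxm, hxp⟩ := SetLike.not_le_iff_exists.mp hp
      have hpann : Module.annihilator A N = p.1 := by
        rw [f.annihilator_eq, Ideal.annihilator_quotient]
      have hreg : IsSMulRegular N x := by
        rw [f.isSMulRegular_congr, isSMulRegular_iff_right_eq_zero_of_smul]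
        intro y hy
        obtain ⟨y, rfl⟩ := Ideal.Quotient.mk_surjective y
        have : (Ideal.Quotient.mk p.1 (x * y)) = 0 := hy
        rw [Ideal.Quotient.eq_zero_iff_mem] at this ⊢
        exact (p.2.mem_or_mem this).resolve_left hxp
      refine nak (N := ModuleCat.of A N) hxm hreg n ?_
      refine ih (p.1 ⊔ Ideal.span {x}) ?_ (QuotSMulTop x N) ?_ (n + 1) (by omega)
      · refine lt_of_le_of_ne ((hI.trans hpann.le).trans le_sup_left) fun h => hxp ?_
        have : x ∈ I := h ▸ (le_sup_right : _ ≤ p.1 ⊔ Ideal.span {x}) (Ideal.mem_span_singleton_self x)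
        exact hpann.le (hI this)
      · rw [sup_le_iff]
        constructor
        · rw [← hpann]
          exact LinearMap.annihilator_le_of_surjective _ (Submodule.mkQ_surjective _)
        · rw [Ideal.span_singleton_le_iff_mem, Module.mem_annihilator]
          intro m
          obtain ⟨m, rfl⟩ := Submodule.mkQ_surjective _ m
          rw [← map_smul, ← LinearMap.mem_ker, Submodule.ker_mkQ]
          exact Submodule.smul_mem_pointwise_smul _ _ _ trivial
  | exact N₁ N₂ N₃ f g hf hg hfg h₁ h₃ =>
    intro hI n hn
    have hS := ModuleCat.shortComplex_shortExact
      (ModuleCat.shortComplexOfCompEqZero f g hfg.linearMap_comp_eq_zero) hfg hf hg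
    exact subsing_mid hS Y n
      (h₁ (hI.trans (LinearMap.annihilator_le_of_injective _ hf)) n hn)
      (h₃ (hI.trans (LinearMap.annihilator_le_of_surjective _ hg)) n hn)



lemma ann_residue : Module.annihilator A (ResidueField A) = maximalIdeal A :=
  Ideal.annihilator_quotient

lemma regular_quotient_prime (p : Ideal A) [hp : p.IsPrime] {x : A} (hxp : x ∉ p) :
    IsSMulRegular (A ⧸ p) x := by
  rw [isSMulRegular_iff_right_eq_zero_of_smul]
  intro y hy
  obtain ⟨y, rfl⟩ := Ideal.Quotient.mk_surjective y
  have : (Ideal.Quotient.mk p (x * y)) = 0 := hy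
  rw [Ideal.Quotient.eq_zero_iff_mem] at this ⊢
  exact (hp.mem_or_mem this).resolve_left hxp

lemma smul_top_lt (I : Ideal A) (hI : I ≠ ⊤) : I • (⊤ : Submodule A (ModuleCat.of A A)) < ⊤ := by
  have : I • (⊤ : Submodule A A) < ⊤ := by
    simpa using lt_top_iff_ne_top.mpr hI
  exact this

/-- Forward direction, in terms of `Abelian.Ext`. -/
theorem forward (r : ℕ)
    (hr : ∀ (N : ModuleCat.{0} A) (i : ℕ), r < i → Subsingleton (Ext N (ModuleCat.of A A) i)) :
    ∃ d : ℕ, ringKrullDim A = (d : WithBot ℕ∞) ∧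
      Nonempty (Ext (ModuleCat.of A (ResidueField A)) (ModuleCat.of A A) d ≃ₗ[A] ResidueField A) ∧
      ∀ n : ℕ, n ≠ d → Subsingleton (Ext (ModuleCat.of A (ResidueField A)) (ModuleCat.of A A) n) := by
  classical
  have hD : ∃ n, ¬ Subsingleton (Ext (ModuleCat.of A (ResidueField A)) (ModuleCat.of A A) n) := by
    by_contra! hcon
    have h0 := vanish (ModuleCat.of A A) 0 (fun n _ => hcon n) ⊥ A bot_le 0 le_rfl
    have : Subsingleton (ModuleCat.of A A ⟶ ModuleCat.of A A) :=
      Ext.addEquiv₀.subsingleton_congr.mp h0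
    have : Subsingleton (A →ₗ[A] A) := (ModuleCat.homAddEquiv (M := ModuleCat.of A A)
      (N := ModuleCat.of A A)).symm.subsingleton
    have h1 : (LinearMap.id : A →ₗ[A] A) 1 = (0 : A →ₗ[A] A) 1 := by
      rw [Subsingleton.elim (LinearMap.id : A →ₗ[A] A) 0]
    simp at h1
  obtain ⟨t, ht, hlow⟩ : ∃ t, ¬ Subsingleton (Ext (ModuleCat.of A (ResidueField A)) (ModuleCat.of A A) t) ∧
      ∀ i < t, Subsingleton (Ext (ModuleCat.of A (ResidueField A)) (ModuleCat.of A A) i) :=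
    ⟨Nat.find hD, Nat.find_spec hD, fun i hi => not_not.mp (Nat.find_min hD hi)⟩
  have hsupp : Module.support A (ModuleCat.of A (ResidueField A)) =
      PrimeSpectrum.zeroLocus (maximalIdeal A) := by
    rw [Module.support_eq_zeroLocus]
    exact congrArg (fun I : Ideal A => PrimeSpectrum.zeroLocus (I : Set A)) ann_residue
  have hmlt := smul_top_lt (maximalIdeal A) (maximalIdeal.isMaximal A).ne_top
  obtain ⟨rs, hlen, hrsm, hrs⟩ := ModuleCat.exists_isRegular_of_exists_subsingleton_ext
    (maximalIdeal A) t (ModuleCat.of A A) hmlt (ModuleCat.of A (ResidueField A)) hsupp hlow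
  have hno : ∀ ys : List A, ys.length = t + 1 → (∀ y ∈ ys, y ∈ maximalIdeal A) →
      ¬ RingTheory.Sequence.IsRegular A ys := by
    intro ys hys hym hreg
    exact ht (ModuleCat.subsingleton_ext_of_exists_isRegular (maximalIdeal A)
      (ModuleCat.of A (ResidueField A)) hsupp.subset (ModuleCat.of A A) hmlt ys hym hreg t
      (by omega))
  obtain ⟨Q, ⟨eQ⟩, hQ, hcyc⟩ := koszul (ModuleCat.of A A) rs (ModuleCat.of A A) 0
    hrs.toIsWeaklyRegular
    (fun i hi => by
      obtain ⟨i, rfl⟩ : ∃ k, i = k + 1 := ⟨i - 1, by omega⟩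
      have : Projective (ModuleCat.of A A) := inferInstance
      exact Ext.subsingleton_of_projective _ _ i)
    ⟨((Ext.linearEquiv₀ (R := A)).trans (ModuleCat.homLinearEquiv (S := A))).symm.toLinearMap ∘ₗ
      (LinearMap.ringLmapEquivSelf A A A).symm.toLinearMap, by
        rw [LinearMap.coe_comp]
        exact (LinearEquiv.surjective _).comp (LinearEquiv.surjective _)⟩
  rw [zero_add, hlen] at hQ hcyc
  obtain ⟨f, hf⟩ := hcyc
  have : Module.Finite A Q := Module.Finite.equiv eQ.symm
  -- the residue field embeds into `Q`
  have hhom : Nontrivial (ResidueField A →ₗ[A] Q) := by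
    rw [← not_subsingleton_iff_nontrivial, IsSMulRegular.subsingleton_linearMap_iff]
    rintro ⟨x, hx, hxQ⟩
    rw [ann_residue] at hx
    have hmem : ∀ y ∈ rs ++ [x], y ∈ maximalIdeal A := by
      intro y hy
      rcases List.mem_append.mp hy with hy | hy
      · exact hrsm y hy
      · rw [List.mem_singleton.mp hy]; exact hx
    refine hno (rs ++ [x]) (by simp [hlen]) hmem ?_
    rw [IsLocalRing.isRegular_iff_isWeaklyRegular_of_subset_maximalIdeal hmem,
      RingTheory.Sequence.isWeaklyRegular_append_iff]
    refine ⟨hrs.toIsWeaklyRegular, ?_⟩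
    rw [RingTheory.Sequence.isWeaklyRegular_singleton_iff]
    exact (eQ.isSMulRegular_congr x).mp hxQ
  obtain ⟨g, hg0⟩ := exists_ne (0 : ResidueField A →ₗ[A] Q)
  have hsimple : IsSimpleModule A (ResidueField A) :=
    isSimpleModule_iff_isCoatom.mpr (maximalIdeal.isMaximal A).out
  have hg : Function.Injective g := (LinearMap.injective_or_eq_zero g).resolve_right hg0
  have hS := ModuleCat.shortComplex_shortExact
    (ModuleCat.shortComplexOfCompEqZero g (LinearMap.range g).mkQ
      g.exact_map_mkQ_range.linearMap_comp_eq_zero) g.exact_map_mkQ_range hg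
      (Submodule.mkQ_surjective _)
  -- vanishing above `t`
  have hhigh : ∀ j : ℕ, (∀ (N : Type) [AddCommGroup N] [Module A N] [Module.Finite A N] (i : ℕ),
        t + 1 + j ≤ i → Subsingleton (Ext (ModuleCat.of A N) (ModuleCat.of A A) i)) →
      (∀ (N : Type) [AddCommGroup N] [Module A N] [Module.Finite A N] (i : ℕ),
        t + 1 ≤ i → Subsingleton (Ext (ModuleCat.of A N) (ModuleCat.of A A) i)) := by
    intro j
    induction j with
    | zero => intro h; exact h
    | succ j ih =>
      intro h
      apply ih
      intro N _ _ _ i hi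
      refine vanish (ModuleCat.of A A) (t + 1 + j) (fun n hn => ?_) ⊥ N bot_le i hi
      refine subsingleton_of_forall_eq 0 fun e => ?_
      have s3 := h (Q ⧸ LinearMap.range g) (n + 1) (by omega)
      have s2 := hQ n (by omega)
      obtain ⟨y, hy⟩ := Ext.contravariant_sequence_exact₁ hS (ModuleCat.of A A) e (add_comm 1 n)
        (@Subsingleton.elim _ s3 _ _)
      rw [← hy, @Subsingleton.elim _ s2 y 0]
      exact Ext.comp_zero _ _ _ _ _
  replace hhigh := hhigh r fun N _ _ _ i hi => hr _ _ (by omega)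
  refine ⟨t, ?_, ?_, ?_⟩
  · have hdim := ringKrullDim_add_length_eq_ringKrullDim_of_isRegular rs hrs
    have hle : Ideal.ofList rs ≤ maximalIdeal A := Ideal.span_le.mpr hrsm
    have : Nontrivial (A ⧸ Ideal.ofList rs) := Ideal.Quotient.nontrivial_iff.mpr
      fun h => (maximalIdeal.isMaximal A).ne_top (top_le_iff.mp (h ▸ hle))
    have hk : Ring.KrullDimLE 0 (A ⧸ Ideal.ofList rs) := by
      refine Ring.KrullDimLE.mk₀ fun P hP => ?_
      let p := P.comap (Ideal.Quotient.mk (Ideal.ofList rs))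
      have hp : p.IsPrime := Ideal.comap_isPrime _ _
      have hrsp : ∀ y ∈ rs, y ∈ p := by
        intro y hy
        have : Ideal.Quotient.mk (Ideal.ofList rs) y = 0 :=
          Ideal.Quotient.eq_zero_iff_mem.mpr (Ideal.subset_span hy)
        simp [p, Ideal.mem_comap, this]
      have hmp : maximalIdeal A ≤ p := by
        by_contra hmp
        obtain ⟨x, hxm, hxp⟩ := SetLike.not_le_iff_exists.mp hmp
        have hsp : Module.support A (ModuleCat.of A (A ⧸ p)) = PrimeSpectrum.zeroLocus p := by
          rw [Module.support_eq_zeroLocus]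
          exact congrArg (fun I : Ideal A => PrimeSpectrum.zeroLocus (I : Set A))
            Ideal.annihilator_quotient
        have h1 : Subsingleton (Ext (ModuleCat.of A (A ⧸ p)) (ModuleCat.of A A) t) :=
          nak hxm (regular_quotient_prime p hxp) t (hhigh _ (t + 1) le_rfl)
        have hplt := smul_top_lt p hp.ne_top
        have h2 := ModuleCat.subsingleton_ext_of_exists_isRegular p
          (ModuleCat.of A (A ⧸ p)) hsp.subset (ModuleCat.of A A) hplt rs hrsp hrs
        obtain ⟨ys, hylen, hyp, hy⟩ := ModuleCat.exists_isRegular_of_exists_subsingleton_ext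
          p (t + 1) (ModuleCat.of A A) hplt (ModuleCat.of A (A ⧸ p)) hsp (fun i hi => by
            rcases Nat.lt_succ_iff_lt_or_eq.mp hi with h | h
            · exact h2 i (by omega)
            · rw [h]; exact h1)
        exact hno ys hylen (fun y hy => le_maximalIdeal hp.ne_top (hyp y hy)) hy
      have hpm : p.IsMaximal := by
        rw [← (maximalIdeal.isMaximal A).eq_of_le hp.ne_top hmp]
        exact maximalIdeal.isMaximal A
      rw [← Ideal.map_comap_of_surjective _ Ideal.Quotient.mk_surjective P]
      refine (Ideal.map_eq_top_or_isMaximal_of_surjective _ Ideal.Quotient.mk_surjective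
        hpm).resolve_left fun h => ?_
      rw [Ideal.map_comap_of_surjective _ Ideal.Quotient.mk_surjective P] at h
      exact hP.ne_top h
    rw [← hdim, ringKrullDimZero_iff_ringKrullDim_eq_zero.mp hk, hlen, zero_add]
  · let G : Ext Q (ModuleCat.of A A) t →ₗ[A]
        Ext (ModuleCat.of A (ResidueField A)) (ModuleCat.of A A) t :=
      (Ext.mk₀ (ModuleCat.ofHom g : ModuleCat.of A (ResidueField A) ⟶ Q)).precompOfLinear A
        (ModuleCat.of A A) (zero_add t)
    have hG : Function.Surjective G := by
      intro e
      have s3 := hhigh (Q ⧸ LinearMap.range g) (t + 1) le_rfl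
      exact Ext.contravariant_sequence_exact₁ hS (ModuleCat.of A A) e (add_comm 1 t)
        (@Subsingleton.elim _ s3 _ _)
    let F := G ∘ₗ f
    have hF : Function.Surjective F := hG.comp hf
    have hker : LinearMap.ker F = maximalIdeal A := by
      symm
      refine (maximalIdeal.isMaximal A).eq_of_le ?_ ?_
      · intro h
        apply ht
        have : F = 0 := LinearMap.ker_eq_top.mp h
        refine subsingleton_of_forall_eq 0 fun e => ?_
        obtain ⟨a, rfl⟩ := hF e
        simp [this]
      · intro x hx
        rw [LinearMap.mem_ker]
        have h1 : F x = x • F 1 := by rw [← map_smul]; simp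
        have key : ∀ z : Ext (ModuleCat.of A (ResidueField A)) (ModuleCat.of A A) t,
            x • z = (Ext.mk₀ (x • 𝟙 (ModuleCat.of A (ResidueField A)))).comp z (zero_add t) := by
          intro z
          simp [Ext.mk₀_smul]
        have h0 : x • 𝟙 (ModuleCat.of A (ResidueField A)) = 0 := by
          ext y
          have : x • (y : ResidueField A) = 0 :=
            Module.mem_annihilator.mp (ann_residue (A := A) ▸ hx) y
          exact this
        rw [h1, key, h0]; simp
    exact ⟨(F.quotKerEquivOfSurjective hF).symm.trans (Submodule.quotEquivOfEq _ _ hker)⟩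
  · intro n hn
    rcases lt_or_gt_of_ne hn with h | h
    · exact hlow n h
    · exact hhigh (ResidueField A) n h

theorem backward (d : ℕ)
    (h : ∀ n, d ≤ n → Subsingleton
      (Ext (ModuleCat.of A (ResidueField A)) (ModuleCat.of A A) n))
    (N : ModuleCat.{0} A) (i : ℕ) (hi : d < i) : Subsingleton (Ext N (ModuleCat.of A A) i) := by
  have := injdim d (ModuleCat.of A A) fun I =>
    vanish (ModuleCat.of A A) d h ⊥ (A ⧸ I) bot_le (d + 1) (by omega)
  exact HasInjectiveDimensionLT.subsingleton (ModuleCat.of A A) (d + 1) i hi N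

end BassAux

/-- Bass's characterization of Gorenstein local rings: `A` is Gorenstein
(`injdim_A A < ∞`) iff `Ext^n_A(k, A) ≅ k` for `n = dim A` and
`Ext^n_A(k, A) = 0` for `n ≠ dim A`. -/
theorem stmt12 (A : Type) [CommRing A] [IsNoetherianRing A] [IsLocalRing A] :
    injDim A (ModuleCat.of A A) < ⊤ ↔
      ∃ d : ℕ, ringKrullDim A = (d : WithBot ℕ∞) ∧
        Nonempty ((extModule A (ModuleCat.of A (IsLocalRing.ResidueField A))
          (ModuleCat.of A A) d) ≃ₗ[A] IsLocalRing.ResidueField A) ∧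
        ∀ n : ℕ, n ≠ d → Subsingleton (extModule A
          (ModuleCat.of A (IsLocalRing.ResidueField A)) (ModuleCat.of A A) n) := by
  constructor
  · intro h
    obtain ⟨n, hn, hlt⟩ := sInf_lt_iff.mp h
    obtain ⟨r, rfl⟩ := ENat.ne_top_iff_exists.mp hlt.ne
    obtain ⟨d, hd, ⟨e⟩, hv⟩ := BassAux.forward (A := A) r fun N i hi => by
      obtain ⟨c⟩ := BassAux.compare N (ModuleCat.of A A) i
      have := hn N i (by exact_mod_cast hi)
      exact c.symm.toEquiv.subsingleton
    refine ⟨d, hd, ?_, fun n hn => ?_⟩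
    · obtain ⟨c⟩ := BassAux.compare (ModuleCat.of A (IsLocalRing.ResidueField A))
        (ModuleCat.of A A) d
      exact ⟨c.trans e⟩
    · obtain ⟨c⟩ := BassAux.compare (ModuleCat.of A (IsLocalRing.ResidueField A))
        (ModuleCat.of A A) n
      have := hv n hn
      exact c.toEquiv.subsingleton
  · rintro ⟨d, -, -, hv⟩
    have hb := BassAux.backward (A := A) (d + 1) fun n hn => by
      obtain ⟨c⟩ := BassAux.compare (ModuleCat.of A (IsLocalRing.ResidueField A))
        (ModuleCat.of A A) n
      have := hv n (by omega)
      exact c.symm.toEquiv.subsingleton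
    refine lt_of_le_of_lt (sInf_le (a := ((d + 1 : ℕ) : ℕ∞)) ?_) (ENat.coe_lt_top _)
    intro N i hi
    obtain ⟨c⟩ := BassAux.compare N (ModuleCat.of A A) i
    have := hb N i (by exact_mod_cast hi)
    exact c.toEquiv.subsingleton
end

section
/- Let A be a commutative Noetherian local ring. If injdim_A A < ∞, then dim A = injdim_A A = depth A; in particular a Gorenstein local ring is Cohen–Macaulay. -/
open CategoryTheory

section

open CategoryTheory Abelian IsLocalRing RingTheory.Sequence


lemma ext_cmp (R : Type) [CommRing R] (N M : ModuleCat R) (i : ℕ) :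
    Subsingleton (extModule R N M (i+1)) ↔ Subsingleton (Abelian.Ext N M (i+1)) := by
  let P := projectiveResolution N
  have e := P.isoExt (R := R) (i+1) M
  have h1 : Subsingleton (extModule R N M (i+1)) ↔
      (P.complex.linearYonedaObj R M).ExactAt (i+1) := by
    rw [HomologicalComplex.exactAt_iff_isZero_homology, ← e.isZero_iff,
      ModuleCat.isZero_iff_subsingleton]
    rfl
  rw [h1, HomologicalComplex.exactAt_iff' _ i (i+1) (i+2) (by simp) (by simp),
    ShortComplex.moduleCat_exact_iff]
  constructor
  · intro h
    refine ⟨fun a b => ?_⟩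
    suffices ∀ a : Abelian.Ext N M (i+1), a = 0 by rw [this a, this b]
    intro a
    obtain ⟨f, hf, rfl⟩ := P.extMk_surjective a (i+2) rfl
    rw [P.extMk_eq_zero_iff _ _ _ _ i rfl]
    obtain ⟨g, hg⟩ := h f hf
    exact ⟨g, hg⟩
  · intro h f hf
    have := (P.extMk_eq_zero_iff f (i+2) rfl hf i rfl).1 (Subsingleton.elim _ _)
    exact this


lemma injLT_of_quot (R : Type) [CommRing R] (M : ModuleCat.{0} R) (n : ℕ)
    (h : ∀ I : Ideal R, Subsingleton (Abelian.Ext (ModuleCat.of R (R ⧸ I)) M (n + 1))) :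
    HasInjectiveDimensionLT M (n + 1) := by
  induction n generalizing M with
  | zero =>
    rw [zero_add, ← injective_iff_hasInjectiveDimensionLT_one,
      ← Module.injective_iff_injective_object, ← Module.Baer.iff_injective]
    intro I g
    let S : ShortComplex (ModuleCat R) := ModuleCat.shortComplexOfCompEqZero I.subtype I.mkQ
      (by ext x; simp [Ideal.Quotient.eq_zero_iff_mem])
    have hS : S.ShortExact := ModuleCat.shortComplex_shortExact S
      (by intro x; simp [S, Ideal.Quotient.eq_zero_iff_mem]) (Subtype.val_injective) (Submodule.mkQ_surjective _)
    have := h I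
    obtain ⟨f, hf⟩ := Ext.contravariant_sequence_exact₁ hS M
      (Ext.mk₀ (ModuleCat.ofHom g : S.X₁ ⟶ M)) (n₁ := 1) rfl (Subsingleton.elim (α := Abelian.Ext (ModuleCat.of R (R ⧸ I)) M 1) _ _)
    obtain ⟨f, rfl⟩ := (Ext.mk₀_bijective _ _).2 f
    rw [Ext.mk₀_comp_mk₀, (Ext.mk₀_bijective _ _).1.eq_iff] at hf
    refine ⟨f.hom, fun x hx => ?_⟩
    have := congrArg (fun t => t.hom ⟨x, hx⟩) hf
    exact this
  | succ n ih =>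
    let ⟨I, _, f, _⟩ := EnoughInjectives.presentation M
    let T := ShortComplex.mk f (Limits.cokernel.π f) (Limits.cokernel.condition f)
    have hT : T.ShortExact := { exact := ShortComplex.exact_cokernel f }
    refine (hT.hasInjectiveDimensionLT_X₃_iff n inferInstance).1 (ih _ fun J => ?_)
    refine ⟨fun a b => ?_⟩
    suffices ∀ a : Abelian.Ext (ModuleCat.of R (R ⧸ J)) T.X₃ (n+1), a = 0 by rw [this a, this b]
    intro a
    have := h J
    obtain ⟨y, hy⟩ := Ext.covariant_sequence_exact₃ _ hT a rfl (Subsingleton.elim (α := Abelian.Ext (ModuleCat.of R (R ⧸ J)) M (n+1+1)) _ _)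
    have : Injective T.X₂ := ‹_›
    rw [← hy, Ext.eq_zero_of_injective y, Ext.zero_comp]


lemma ext_prime_zero (A : Type) [CommRing A] [IsNoetherianRing A] [IsLocalRing A]
    (M : ModuleCat.{0} A) [Module.Finite A M] (n : ℕ) [HasInjectiveDimensionLT M (n + 1)]
    (p : Ideal A) [p.IsPrime] (hp : p ≠ maximalIdeal A) :
    Subsingleton (Abelian.Ext (ModuleCat.of A (A ⧸ p)) M n) := by
  obtain ⟨x, hx, hxp⟩ : ∃ x ∈ maximalIdeal A, x ∉ p := by
    by_contra! h
    exact hp (le_antisymm (le_maximalIdeal (Ideal.IsPrime.ne_top ‹_›)) h)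
  let N := ModuleCat.of A (A ⧸ p)
  have reg : IsSMulRegular N x := by
    intro a b hab
    obtain ⟨a, rfl⟩ := Ideal.Quotient.mk_surjective a
    obtain ⟨b, rfl⟩ := Ideal.Quotient.mk_surjective b
    replace hab : Ideal.Quotient.mk p (x * a) = Ideal.Quotient.mk p (x * b) := hab
    rw [Ideal.Quotient.eq, ← mul_sub] at hab
    exact Ideal.Quotient.eq.2 ((Ideal.IsPrime.mem_or_mem ‹_› hab).resolve_left hxp)
  have hS := reg.smulShortComplex_shortExact
  have key : ∀ y : Abelian.Ext N M n, ∃ z : Abelian.Ext N M n, x • z = y := by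
    intro y
    obtain ⟨z, hz⟩ := Ext.contravariant_sequence_exact₁ hS M y rfl
      (Ext.eq_zero_of_hasInjectiveDimensionLT _ (n + 1) (by omega))
    refine ⟨z, ?_⟩
    rw [← hz]
    have aux : ∀ z : Abelian.Ext N M n,
        (Ext.mk₀ (x • 𝟙 N)).comp z (zero_add n) = x • z := fun z => by
      rw [Ext.mk₀_smul, Ext.smul_comp, Ext.mk₀_id_comp]
    exact (aux z).symm
  by_contra ntr
  rw [not_subsingleton_iff_nontrivial] at ntr
  have : x ∈ (Module.annihilator A (Abelian.Ext N M n)).jacobson :=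
    (IsLocalRing.maximalIdeal_le_jacobson _) hx
  refine absurd ?_ (Submodule.top_ne_pointwise_smul_of_mem_jacobson_annihilator this)
  rw [eq_comm, eq_top_iff]
  intro y hy
  obtain ⟨z, rfl⟩ := key y
  exact Submodule.smul_mem_pointwise_smul _ _ ⊤ trivial

lemma injLT_of_residue (A : Type) [CommRing A] [IsNoetherianRing A] [IsLocalRing A]
    (M : ModuleCat.{0} A) [Module.Finite A M] (n : ℕ) [HasInjectiveDimensionLT M (n + 1)]
    (h : Subsingleton (Abelian.Ext (ModuleCat.of A (A ⧸ maximalIdeal A)) M n)) :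
    ∀ (N : Type) [AddCommGroup N] [Module A N] [Module.Finite A N],
      Subsingleton (Abelian.Ext (ModuleCat.of A N) M n) := by
  intro N _ _ hN
  induction hN using IsNoetherianRing.induction_on_isQuotientEquivQuotientPrime A with
  | subsingleton N =>
    refine ⟨fun a b => ?_⟩
    have h0 : Limits.IsZero (ModuleCat.of A N) := ModuleCat.isZero_of_subsingleton _
    rw [← Ext.mk₀_id_comp a, ← Ext.mk₀_id_comp b, (Limits.IsZero.iff_id_eq_zero _).1 h0]
    simp
  | quotient N p f =>
    have h1 : Subsingleton (Abelian.Ext (ModuleCat.of A (A ⧸ p.1)) M n) := by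
      by_cases hp : p.1 = maximalIdeal A
      · rwa [hp]
      · have := p.2
        exact ext_prime_zero A M n p.1 hp
    refine ⟨fun a b => ?_⟩
    have e : ModuleCat.of A N ≅ ModuleCat.of A (A ⧸ p.1) := f.toModuleIso
    have aux : ∀ a : Abelian.Ext (ModuleCat.of A N) M n, a = 0 := by
      intro a
      have : (Ext.mk₀ e.hom).comp ((Ext.mk₀ e.inv).comp a (zero_add n)) (zero_add n) = a := by
        simp
      rw [← this, Subsingleton.elim ((Ext.mk₀ e.inv).comp a (zero_add n)) 0]
      simp
    rw [aux a, aux b]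
  | exact N₁ N₂ N₃ f g hf hg hfg h₁ h₃ =>
    let S : ShortComplex (ModuleCat A) := ModuleCat.shortComplexOfCompEqZero f g
      hfg.linearMap_comp_eq_zero
    have hS : S.ShortExact := ModuleCat.shortComplex_shortExact S hfg hf hg
    have aux : ∀ a : Abelian.Ext S.X₂ M n, a = 0 := by
      intro a
      obtain ⟨b, rfl⟩ := Ext.contravariant_sequence_exact₂ hS M a (@Subsingleton.elim _ h₁ _ _)
      rw [@Subsingleton.elim _ h₃ b 0]
      simp
    exact ⟨fun a b => by rw [aux a, aux b]⟩


lemma reg_of_ext (A : Type) [CommRing A] [IsNoetherianRing A] [IsLocalRing A] (n : ℕ)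
    (I : Ideal A) (hI : I ≠ ⊤)
    (h : ∀ i < n, Subsingleton (Abelian.Ext (ModuleCat.of A (A ⧸ I)) (ModuleCat.of A A) i)) :
    ∃ rs : List A, rs.length = n ∧ (∀ r ∈ rs, r ∈ I) ∧ IsRegular A rs :=
  ModuleCat.exists_isRegular_of_exists_subsingleton_ext I n (ModuleCat.of A A)
    (by simpa using hI.lt_top) (ModuleCat.of A (A ⧸ I))
    (by rw [Module.support_eq_zeroLocus, Ideal.annihilator_quotient]) h

lemma ext_of_reg (A : Type) [CommRing A] [IsNoetherianRing A] [IsLocalRing A]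
    (I : Ideal A) (hI : I ≠ ⊤) (rs : List A) (h : ∀ r ∈ rs, r ∈ I) (hr : IsRegular A rs) :
    ∀ i < rs.length, Subsingleton (Abelian.Ext (ModuleCat.of A (A ⧸ I)) (ModuleCat.of A A) i) :=
  ModuleCat.subsingleton_ext_of_exists_isRegular I (ModuleCat.of A (A ⧸ I))
    (by rw [Module.support_eq_zeroLocus, Ideal.annihilator_quotient]) (ModuleCat.of A A)
    (by simpa using hI.lt_top) rs h hr

/-- A regular sequence which cannot be extended. -/
lemma extend_reg (A : Type) [CommRing A] [IsNoetherianRing A] [IsLocalRing A]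
    (rs : List A) (h : ∀ r ∈ rs, r ∈ maximalIdeal A) (hr : IsRegular A rs)
    (hs : Subsingleton ((A ⧸ maximalIdeal A) →ₗ[A] (A ⧸ Ideal.ofList rs))) :
    ∃ rs' : List A, rs'.length = rs.length + 1 ∧ (∀ r ∈ rs', r ∈ maximalIdeal A) ∧
      IsRegular A rs' := by
  obtain ⟨y, hy, hreg⟩ := IsSMulRegular.subsingleton_linearMap_iff.1 hs
  rw [Ideal.annihilator_quotient] at hy
  have hmem : ∀ r ∈ rs ++ [y], r ∈ maximalIdeal A := by
    intro r hr'
    rcases List.mem_append.1 hr' with h' | h'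
    · exact h r h'
    · rw [List.mem_singleton.1 h']; exact hy
  refine ⟨rs ++ [y], by simp, hmem, ?_⟩
  refine (isRegular_iff _ _).2 ⟨(isWeaklyRegular_append_iff A _ _).2 ⟨hr.1, ?_⟩, ?_⟩
  · have heq : (Ideal.ofList rs • ⊤ : Submodule A A) = Ideal.ofList rs := by simp
    rw [isWeaklyRegular_singleton_iff, heq]
    exact hreg
  · intro htop
    have hle : Ideal.ofList (rs ++ [y]) ≤ maximalIdeal A := Ideal.span_le.2 hmem
    have : (Ideal.ofList (rs ++ [y]) • ⊤ : Submodule A A) = Ideal.ofList (rs ++ [y]) := by simp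
    rw [this] at htop
    rw [← htop, top_le_iff] at hle
    exact (Ideal.IsPrime.ne_top inferInstance) hle

theorem core (A : Type) [CommRing A] [IsNoetherianRing A] [IsLocalRing A] (n : ℕ)
    (hn : HasInjectiveDimensionLT (ModuleCat.of A A) (n + 1))
    (hk : ¬ Subsingleton (Abelian.Ext (ModuleCat.of A (A ⧸ maximalIdeal A)) (ModuleCat.of A A) n))
    (hvan : ∀ (p : Ideal A) [p.IsPrime], p ≠ maximalIdeal A →
      Subsingleton (Abelian.Ext (ModuleCat.of A (A ⧸ p)) (ModuleCat.of A A) n)) :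
    ringKrullDim A = n ∧ depth A A = n := by
  have hm : maximalIdeal A ≠ ⊤ := Ideal.IsPrime.ne_top inferInstance
  have bound : ∀ rs : List A, (∀ r ∈ rs, r ∈ maximalIdeal A) → IsRegular A rs →
      rs.length ≤ n := by
    intro rs h hr
    by_contra! hlt
    exact hk (ext_of_reg A _ hm rs h hr n hlt)
  -- maximal regular sequence
  have hex : ∃ t, (∃ rs : List A, rs.length = t ∧ (∀ r ∈ rs, r ∈ maximalIdeal A) ∧
      IsRegular A rs) ∧ ¬ (∃ rs : List A, rs.length = t + 1 ∧
        (∀ r ∈ rs, r ∈ maximalIdeal A) ∧ IsRegular A rs) := by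
    by_contra! hcon
    have : ∀ t, ∃ rs : List A, rs.length = t ∧ (∀ r ∈ rs, r ∈ maximalIdeal A) ∧
        IsRegular A rs := by
      intro t
      induction t with
      | zero => exact ⟨[], rfl, by simp, by simp [isRegular_iff]⟩
      | succ t ih => exact hcon t ih
    obtain ⟨rs, hl, h, hr⟩ := this (n + 1)
    have := bound rs h hr
    omega
  obtain ⟨t, ⟨rs, hl, hmem, hr⟩, hmax⟩ := hex
  have htn : t ≤ n := hl ▸ bound rs hmem hr
  have hnt : n ≤ t := by
    by_contra! hlt
    have hns : ¬ Subsingleton ((A ⧸ maximalIdeal A) →ₗ[A] (A ⧸ Ideal.ofList rs)) := by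
      intro hs
      exact hmax (hl ▸ extend_reg A rs hmem hr hs)
    rw [not_subsingleton_iff_nontrivial] at hns
    obtain ⟨f, hf⟩ := exists_ne (0 : (A ⧸ maximalIdeal A) →ₗ[A] (A ⧸ Ideal.ofList rs))
    have : IsSimpleModule A (A ⧸ maximalIdeal A) :=
      isSimpleModule_iff_isCoatom.2 (Ideal.IsMaximal.out (self := maximalIdeal.isMaximal A))
    have finj : Function.Injective f := (LinearMap.injective_or_eq_zero f).resolve_right hf
    let S : ShortComplex (ModuleCat A) := ModuleCat.shortComplexOfCompEqZero f f.range.mkQ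
      f.exact_map_mkQ_range.linearMap_comp_eq_zero
    have hS : S.ShortExact := ModuleCat.shortComplex_shortExact S
      f.exact_map_mkQ_range finj (Submodule.mkQ_surjective _)
    have hpd : HasProjectiveDimensionLT (ModuleCat.of A (A ⧸ Ideal.ofList rs)) n := by
      rw [← projectiveDimension_lt_iff]
      have h1 := ModuleCat.projectiveDimension_quotient_eq_length.{0} rs hr
      have h2 := projectiveDimension_eq_of_iso
        (Shrink.linearEquiv.{0} A (A ⧸ Ideal.ofList rs)).toModuleIso
      rw [← h2, h1, hl]
      exact_mod_cast hlt
    apply hk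
    have aux : ∀ a : Abelian.Ext S.X₁ (ModuleCat.of A A) n, a = 0 := by
      intro a
      obtain ⟨b, rfl⟩ := Ext.contravariant_sequence_exact₁ hS _ a rfl
        (Ext.eq_zero_of_hasInjectiveDimensionLT _ (n + 1) (by omega))
      have : b = 0 := @Ext.eq_zero_of_hasProjectiveDimensionLT _ _ _ _ _ _ _ b n hpd le_rfl
      rw [this]
      simp
    exact ⟨fun a b => (aux a).trans (aux b).symm⟩
  obtain rfl : t = n := le_antisymm htn hnt
  constructor
  · have hd := ringKrullDim_add_length_eq_ringKrullDim_of_isRegular rs hr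
    have hne : Ideal.ofList rs ≠ ⊤ := by
      intro h
      have : Ideal.ofList rs ≤ maximalIdeal A := Ideal.span_le.2 hmem
      rw [h, top_le_iff] at this
      exact hm this
    have : Nontrivial (A ⧸ Ideal.ofList rs) := Ideal.Quotient.nontrivial_iff.2 hne
    have hprime : ∀ p : Ideal A, p.IsPrime → Ideal.ofList rs ≤ p → p = maximalIdeal A := by
      intro p hp hle
      by_contra hpm
      apply hmax
      have hpt : p ≠ ⊤ := hp.ne_top
      have hrp : ∀ r ∈ rs, r ∈ p := fun r h => hle (Ideal.subset_span h)
      obtain ⟨rs', h1, h2, h3⟩ := reg_of_ext A (t + 1) p hpt (by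
        intro i hi
        rcases Nat.lt_succ_iff_lt_or_eq.1 hi with hi | rfl
        · exact ext_of_reg A p hpt rs hrp hr i (by omega)
        · exact hvan p hpm)
      exact ⟨rs', h1, fun r h => le_maximalIdeal hpt (h2 r h), h3⟩
    have h0 : Ring.KrullDimLE 0 (A ⧸ Ideal.ofList rs) := by
      rw [Ideal.krullDimLE_zero_quotient_iff_forall_minimalPrimes_isMaximal]
      intro J hJ
      rw [hprime J hJ.1.1 hJ.1.2]
      exact maximalIdeal.isMaximal A
    have : ringKrullDim (A ⧸ Ideal.ofList rs) = 0 :=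
      ringKrullDimZero_iff_ringKrullDim_eq_zero.1 h0
    rw [← hd, this, hl, zero_add]
  · apply le_antisymm
    · refine sSup_le ?_
      rintro _ ⟨rs, rfl, h1, h2⟩
      exact_mod_cast bound rs h1 h2
    · exact le_sSup ⟨rs, by rw [hl], hmem, hr⟩

end

/-- A Gorenstein local ring is Cohen–Macaulay:
if `injdim_A A < ∞` then `dim A = injdim_A A = depth A`. -/
theorem stmt13 (A : Type) [CommRing A] [IsNoetherianRing A] [IsLocalRing A]
    (h : injDim A (ModuleCat.of A A) < ⊤) :
    ringKrullDim A = (injDim A (ModuleCat.of A A) : WithBot ℕ∞) ∧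
      injDim A (ModuleCat.of A A) = depth A A := by
  obtain ⟨n, hn⟩ := ENat.ne_top_iff_exists.1 h.ne
  have hmem : injDim A (ModuleCat.of A A) ∈ {n : ℕ∞ | ∀ (N : ModuleCat A) (i : ℕ),
      n < (i : ℕ∞) → Subsingleton (extModule A N (ModuleCat.of A A) i)} :=
    csInf_mem ⟨⊤, fun N i hi => absurd hi not_top_lt⟩
  rw [← hn] at hmem
  have hinj : HasInjectiveDimensionLT (ModuleCat.of A A) (n + 1) :=
    injLT_of_quot A _ n fun I => (ext_cmp A _ _ n).1
      (hmem _ (n + 1) (by exact_mod_cast Nat.lt_succ_self n))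
  have hfin : Module.Finite A (ModuleCat.of A A) := inferInstanceAs (Module.Finite A A)
  have hk : ¬ Subsingleton (Abelian.Ext
      (ModuleCat.of A (A ⧸ IsLocalRing.maximalIdeal A)) (ModuleCat.of A A) n) := by
    intro hs
    have hz := injLT_of_residue A (ModuleCat.of A A) n hs
    rcases n with _ | m
    · have h1 := hz A
      have h2 : Subsingleton (ModuleCat.of A A ⟶ ModuleCat.of A A) :=
        Abelian.Ext.homEquiv₀.symm.subsingleton
      have h3 := congrArg (fun f => f.hom (1 : A))
        (Subsingleton.elim (𝟙 (ModuleCat.of A A)) 0)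
      exact one_ne_zero (α := A) h3
    · have h1 : HasInjectiveDimensionLT (ModuleCat.of A A) (m + 1) :=
        injLT_of_quot A _ m fun I => hz (A ⧸ I)
      have h2 : injDim A (ModuleCat.of A A) ≤ (m : ℕ∞) := by
        refine sInf_le ?_
        intro N i hi
        have hi' : m < i := by exact_mod_cast hi
        obtain ⟨j, rfl⟩ : ∃ j, i = j + 1 := ⟨i - 1, by omega⟩
        exact (ext_cmp A _ _ j).2
          (HasInjectiveDimensionLT.subsingleton _ (m + 1) (j + 1) (by omega) _)
      rw [← hn] at h2
      have h3 : m + 1 ≤ m := by exact_mod_cast h2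
      omega
  obtain ⟨h1, h2⟩ := core A n hinj hk
    (fun p _ hp => ext_prime_zero A (ModuleCat.of A A) n p hp)
  rw [← hn, h1, h2]
  exact ⟨rfl, rfl⟩
end

section
/- Let A be a commutative Noetherian local ring with residue field k, and suppose Ext^n_A(k, A) = 0 for all n > dim A and Ext^{dim A}_A(k, A) ≠ 0. Then injdim_A A = dim A and A is Gorenstein. -/
open CategoryTheory

open Abelian

lemma extModule_subsingleton_iff (R : Type) [CommRing R] (M N : ModuleCat R) (n : ℕ) :
    Subsingleton (extModule R M N (n + 1)) ↔ Subsingleton (Abelian.Ext M N (n + 1)) := by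
  let P : ProjectiveResolution M := ProjectiveResolution.of M
  have e := P.isoExt (R := R) (n + 1) N
  have h1 : Subsingleton (extModule R M N (n + 1)) ↔
      Limits.IsZero ((P.complex.linearYonedaObj R N).homology (n + 1)) := by
    rw [← ModuleCat.isZero_iff_subsingleton]
    exact e.isZero_iff
  rw [h1, ← HomologicalComplex.exactAt_iff_isZero_homology,
    HomologicalComplex.exactAt_iff' _ n (n + 1) (n + 2) (by simp) (by simp),
    ShortComplex.moduleCat_exact_iff]
  constructor
  · intro h
    refine subsingleton_of_forall_eq 0 fun x => ?_
    obtain ⟨f, hf, rfl⟩ := P.extMk_surjective x (n + 2) rfl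
    rw [P.extMk_eq_zero_iff _ _ _ _ n rfl]
    obtain ⟨g, hg⟩ := h f hf
    exact ⟨g, hg⟩
  · intro h f hf
    have := (P.extMk_eq_zero_iff (Y := N) f (n + 2) rfl hf n rfl).1 (Subsingleton.elim _ _)
    exact this

lemma ext_quot_vanish (A : Type) [CommRing A] [IsNoetherianRing A] [IsLocalRing A] (d : ℕ)
    (h : ∀ n, d < n → Subsingleton (Abelian.Ext
      (ModuleCat.of A (A ⧸ IsLocalRing.maximalIdeal A)) (ModuleCat.of A A) n)) (I : Ideal A) :
    ∀ n, d < n → Subsingleton (Abelian.Ext (ModuleCat.of A (A ⧸ I)) (ModuleCat.of A A) n) := by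
  induction I using WellFoundedGT.induction with
  | ind I ih =>
  intro n hn
  by_cases htop : I = ⊤
  · have : Subsingleton (ModuleCat.of A (A ⧸ I)) := Ideal.Quotient.subsingleton_iff.2 htop
    have hz : Limits.IsZero (ModuleCat.of A (A ⧸ I)) := ModuleCat.isZero_of_subsingleton _
    refine subsingleton_of_forall_eq 0 fun x => ?_
    rw [← x.mk₀_id_comp, hz.eq_zero_of_src (𝟙 _), Ext.mk₀_zero, Ext.zero_comp]
  by_cases hm : I = IsLocalRing.maximalIdeal A
  · subst hm; exact h n hn
  -- general short exact sequence `0 → A/(I:a) → A/I → A/(I+a) → 0`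
  have hzero : ∀ (a : A) (J : Ideal A) (hJ : J = Submodule.comap (LinearMap.lsmul A A a) I),
      (Submodule.mapQ I (I ⊔ Ideal.span {a}) LinearMap.id le_sup_left).comp
        (Submodule.mapQ J I (LinearMap.lsmul A A a) hJ.le) = 0 := by
    intro a J hJ
    refine Submodule.linearMap_qext _ (LinearMap.ext fun y => ?_)
    refine (Submodule.Quotient.mk_eq_zero _).2 ?_
    exact Ideal.mem_sup_right (Ideal.mem_span_singleton.2 ⟨y, by simp⟩)
  have key : ∀ (a : A) (J : Ideal A) (hJ : J = Submodule.comap (LinearMap.lsmul A A a) I),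
      (ModuleCat.shortComplexOfCompEqZero _ _ (hzero a J hJ)).ShortExact := by
    intro a J hJ
    refine ModuleCat.shortComplex_shortExact _ ?_ ?_ ?_
    · intro y
      obtain ⟨y, rfl⟩ := Submodule.Quotient.mk_surjective _ y
      constructor
      · intro hy
        have hy' : y ∈ I ⊔ Ideal.span {a} := (Submodule.Quotient.mk_eq_zero _).1 hy
        obtain ⟨i, hi, z, hz, rfl⟩ := Submodule.mem_sup.1 hy'
        obtain ⟨c, rfl⟩ := Ideal.mem_span_singleton.1 hz
        refine ⟨Submodule.Quotient.mk c, ?_⟩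
        refine (Submodule.Quotient.eq _).2 ?_
        have : a * c - (i + a * c) = -i := by ring
        simpa [this] using hi
      · rintro ⟨x, hx⟩
        rw [← hx]
        exact LinearMap.congr_fun (hzero a J hJ) x
    · refine (injective_iff_map_eq_zero _).2 fun y hy => ?_
      obtain ⟨y, rfl⟩ := Submodule.Quotient.mk_surjective _ y
      refine (Submodule.Quotient.mk_eq_zero _).2 ?_
      rw [hJ]
      exact (Submodule.Quotient.mk_eq_zero I (x := a * y)).1 hy
    · intro y
      obtain ⟨y, rfl⟩ := Submodule.Quotient.mk_surjective _ y
      exact ⟨Submodule.Quotient.mk y, rfl⟩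
  have hlt : ∀ a, a ∉ I → I < I ⊔ Ideal.span {a} := fun a ha =>
    lt_of_le_of_ne le_sup_left fun he => ha (by
      rw [he]; exact Ideal.mem_sup_right (Ideal.mem_span_singleton_self a))
  by_cases hp : I.IsPrime
  · obtain ⟨x, hx, hxI⟩ : ∃ x ∈ IsLocalRing.maximalIdeal A, x ∉ I := by
      by_contra! hc
      exact hm (le_antisymm (IsLocalRing.le_maximalIdeal htop) hc)
    have hJ : I = Submodule.comap (LinearMap.lsmul A A x) I := by
      ext y
      simp [hp.mul_mem_iff_mem_or_mem, hxI]
    have hS := key x I hJ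
    have h3 := ih _ (hlt x hxI) (1 + n) (by omega)
    have hf : ModuleCat.ofHom (Submodule.mapQ I I (LinearMap.lsmul A A x) hJ.le) =
        x • 𝟙 (ModuleCat.of A (A ⧸ I)) := by
      ext
      rfl
    have hdiv : ∀ y : Abelian.Ext (ModuleCat.of A (A ⧸ I)) (ModuleCat.of A A) n,
        ∃ z, x • z = y := by
      intro y
      obtain ⟨z, hz⟩ := Ext.contravariant_sequence_exact₁ hS (ModuleCat.of A A) y rfl
        (h3.elim _ _)
      refine ⟨z, ?_⟩
      rw [← hz]
      change _ = (Ext.mk₀ (ModuleCat.ofHom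
        (Submodule.mapQ I I (LinearMap.lsmul A A x) hJ.le))).comp z _
      rw [hf, Ext.mk₀_smul, Ext.smul_comp, Ext.mk₀_id_comp]
    have hfin : Module.Finite A (Abelian.Ext (ModuleCat.of A (A ⧸ I)) (ModuleCat.of A A) n) := by
      have : Module.Finite A (ModuleCat.of A (A ⧸ I)) :=
        inferInstanceAs (Module.Finite A (A ⧸ I))
      have : Module.Finite A (ModuleCat.of A A) := inferInstanceAs (Module.Finite A A)
      exact ModuleCat.finite_ext A _ _ n
    have hbot := Submodule.eq_bot_of_le_smul_of_le_jacobson_bot (IsLocalRing.maximalIdeal A)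
      (⊤ : Submodule A (Abelian.Ext (ModuleCat.of A (A ⧸ I)) (ModuleCat.of A A) n)) hfin.fg_top
      (by
        intro y _
        obtain ⟨z, rfl⟩ := hdiv y
        exact Submodule.smul_mem_smul hx trivial)
      (IsLocalRing.maximalIdeal_le_jacobson _)
    exact (Submodule.subsingleton_iff A).1 (subsingleton_of_bot_eq_top hbot.symm)
  · obtain ⟨a, b, ha, hb, hab⟩ : ∃ a b, a ∉ I ∧ b ∉ I ∧ a * b ∈ I := by
      by_contra! hc
      refine hp ⟨htop, fun {a b} hab => ?_⟩
      by_contra! hn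
      exact hc a b hn.1 hn.2 hab
    have hS := key a _ rfl
    have h3 := ih _ (hlt a ha) n hn
    have hIJ : I < Submodule.comap (LinearMap.lsmul A A a) I := by
      refine lt_of_le_of_ne (fun y hy => I.mul_mem_left a hy) fun he => hb ?_
      rw [he]
      exact hab
    have h1 := ih _ hIJ n hn
    refine subsingleton_of_forall_eq 0 fun y => ?_
    obtain ⟨z, hz⟩ := Ext.contravariant_sequence_exact₂ hS (ModuleCat.of A A) y (h1.elim _ _)
    rw [← hz, h3.elim z 0]
    exact Ext.comp_zero ..

lemma hasInjDim_of_quot (A : Type) [CommRing A] (n : ℕ) (M : ModuleCat A)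
    (h : ∀ I : Ideal A, Subsingleton (Abelian.Ext (ModuleCat.of A (A ⧸ I)) M (n + 1))) :
    HasInjectiveDimensionLT M (n + 1) := by
  induction n generalizing M with
  | zero =>
    rw [zero_add, ← injective_iff_hasInjectiveDimensionLT_one,
      ← Module.injective_iff_injective_object, ← Module.Baer.iff_injective]
    intro I g
    have hS := ModuleCat.shortComplex_shortExact
      (ModuleCat.shortComplexOfCompEqZero I.subtype I.mkQ
        (LinearMap.exact_subtype_mkQ I).linearMap_comp_eq_zero)
      (LinearMap.exact_subtype_mkQ I) (Submodule.subtype_injective I) (Submodule.mkQ_surjective I)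
    have := h I
    obtain ⟨φ, hφ⟩ := Ext.contravariant_sequence_exact₁ hS M
      (Ext.mk₀ (ModuleCat.ofHom g)) (zero_add 1) (Subsingleton.elim (α := Ext (ModuleCat.of A (A ⧸ I)) M 1) _ _)
    obtain ⟨φ, rfl⟩ := Ext.homEquiv₀.symm.surjective φ
    have h2 := Ext.homEquiv₀.symm.injective (a₁ := _ ≫ φ) (a₂ := ModuleCat.ofHom g) (by simpa using hφ)
    refine ⟨φ.hom, fun x hx => ?_⟩
    exact ConcreteCategory.congr_hom h2 (⟨x, hx⟩ : I)
  | succ n ih =>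
    obtain ⟨⟨J, _, f, _⟩⟩ := EnoughInjectives.presentation M
    have hS : (ShortComplex.mk f (Limits.cokernel.π f) (Limits.cokernel.condition f)).ShortExact :=
      { exact := ShortComplex.exact_cokernel f }
    rw [← hS.hasInjectiveDimensionLT_X₃_iff n inferInstance]
    apply ih
    intro I
    refine subsingleton_of_forall_eq 0 fun x => ?_
    have := h I
    obtain ⟨y, rfl⟩ := Ext.covariant_sequence_exact₃ _ hS x rfl (Subsingleton.elim (α := Ext (ModuleCat.of A (A ⧸ I)) M (n+1+1)) _ _)
    rw [Ext.eq_zero_of_injective y, Ext.zero_comp]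

/-- If `A` is a commutative Noetherian local ring of Krull dimension `d` with
residue field `k`, `Ext^n_A(k, A) = 0` for all `n > d`, and
`Ext^d_A(k, A) ≠ 0`, then `injdim_A A = d`; in particular `A` is Gorenstein. -/
theorem stmt19 (A : Type) [CommRing A] [IsNoetherianRing A] [IsLocalRing A]
    (d : ℕ) (hd : ringKrullDim A = (d : WithBot ℕ∞))
    (hvanish : ∀ n : ℕ, d < n → Subsingleton (extModule A
      (ModuleCat.of A (IsLocalRing.ResidueField A)) (ModuleCat.of A A) n))
    (hnonzero : Nontrivial (extModule A
      (ModuleCat.of A (IsLocalRing.ResidueField A)) (ModuleCat.of A A) d)) :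
    injDim A (ModuleCat.of A A) = (d : ℕ∞) := by
  apply le_antisymm
  · refine sInf_le ?_
    have hq := ext_quot_vanish A d (fun n hn => by
      obtain ⟨n, rfl⟩ : ∃ m, n = m + 1 := ⟨n - 1, by omega⟩
      exact (extModule_subsingleton_iff A _ _ n).1 (hvanish _ hn))
    have := hasInjDim_of_quot A d (ModuleCat.of A A) (fun I => hq I _ (Nat.lt_succ_self d))
    intro N i hi
    have hi' : d < i := by exact_mod_cast hi
    obtain ⟨n, rfl⟩ : ∃ m, i = m + 1 := ⟨i - 1, by omega⟩
    rw [extModule_subsingleton_iff]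
    exact HasInjectiveDimensionLT.subsingleton _ (d + 1) _ hi' N
  · refine le_sInf fun n hn => ?_
    by_contra! hlt
    have := hn (ModuleCat.of A (IsLocalRing.ResidueField A)) d hlt
    exact not_subsingleton _ this
end
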